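/- arXiv:1305.5089 — 3 statements merged into one kernel-verified Lean document; each statement's English description precedes it below -/
import Mathlib

section
/- Let L be a 3-dimensional complex ω-Lie algebra with ω not identically zero and with dim [L,L] = 2. Then L is isomorphic either to L₁ (basis {x,y,z} with [x,y] = y, [x,z] = 0, [y,z] = z, ω(x,y) = 1, ω(x,z) = ω(y,z) = 0) or to L₂ (basis {x,y,z} with [x,y] = 0, [x,z] = y, [y,z] = z, ω(x,z) = 1, ω(x,y) = ω(y,z) = 0). -/
/-- The bracket of the ω-Lie algebra `L₁` on `ℂ³`, i.e. the bilinear extension of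
`[x,y] = y`, `[x,z] = 0`, `[y,z] = z` on the standard basis `x = e₀, y = e₁, z = e₂`. -/
def brL1 (u v : Fin 3 → ℂ) : Fin 3 → ℂ :=
  ![0, u 0 * v 1 - u 1 * v 0, u 1 * v 2 - u 2 * v 1]

/-- The form of `L₁`: bilinear extension of `ω(x,y) = 1`, `ω(x,z) = ω(y,z) = 0`. -/
def omL1 (u v : Fin 3 → ℂ) : ℂ := u 0 * v 1 - u 1 * v 0

/-- The bracket of the ω-Lie algebra `L₂` on `ℂ³`: bilinear extension of
`[x,y] = 0`, `[x,z] = y`, `[y,z] = z`. -/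
def brL2 (u v : Fin 3 → ℂ) : Fin 3 → ℂ :=
  ![0, u 0 * v 2 - u 2 * v 0, u 1 * v 2 - u 2 * v 1]

/-- The form of `L₂`: bilinear extension of `ω(x,z) = 1`, `ω(x,y) = ω(y,z) = 0`. -/
def omL2 (u v : Fin 3 → ℂ) : ℂ := u 0 * v 2 - u 2 * v 0

/-- `(L, bracket, ω)` is isomorphic, as an ω-Lie algebra, to the ω-Lie algebra on `ℂ³`
with bracket `br'` and form `ω'`: there is a linear bijection intertwining the brackets
and the bilinear forms. -/
def IsOmegaLieIsoTo {L : Type*} [AddCommGroup L] [Module ℂ L]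
    (bracket : L →ₗ[ℂ] L →ₗ[ℂ] L) (ω : L →ₗ[ℂ] L →ₗ[ℂ] ℂ)
    (br' : (Fin 3 → ℂ) → (Fin 3 → ℂ) → (Fin 3 → ℂ))
    (ω' : (Fin 3 → ℂ) → (Fin 3 → ℂ) → ℂ) : Prop :=
  ∃ f : L ≃ₗ[ℂ] (Fin 3 → ℂ),
    (∀ a b : L, f (bracket a b) = br' (f a) (f b)) ∧
    (∀ a b : L, ω' (f a) (f b) = ω a b)

/-!
Let `D` be a plane containing `[L, L]` and `x ∉ D`. Modulo `D`, the Jacobi identity on `x, y, z`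
with `y, z ∈ D` shows that `ω` vanishes on `D`. If `D` were abelian, the identity would then force
`ω(x, D) = 0`, hence `ω = 0`. So there are `y, z ∈ D` with `[y, z] = z ≠ 0`, and the same identity
now reads `[x, v] ≡ ω(x, v) y` modulo `z` for `v ∈ D`. Adding to `x` an element of `D` turns this
congruence into an equality. Here `z` spans `[D, D]`, while `y` may be moved by multiples of `z`:
if `ω(x, z) = 0`, then `ω(x, y) ≠ 0` and rescaling `x` gives `L₁`; otherwise move `y` into the
kernel of `ω(x, ·)`, correct `x` for the new `y`, and rescale it to get `L₂`.
-/

open Module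

section Alternating

variable {R L M : Type*} [CommRing R] [AddCommGroup L] [Module R L] [AddCommGroup M] [Module R M]
  {B : L →ₗ[R] L →ₗ[R] M}

theorem isAlt_of_apply_eq_neg_apply [IsDomain R] [IsTorsionFree R M] [NeZero (2 : R)]
    (h : ∀ u v, B u v = -B v u) : B.IsAlt := by
  intro u
  have two_smul_eq_zero : (2 : R) • B u u = 0 := by
    rw [two_smul, ← eq_neg_iff_add_eq_zero]
    exact h u u
  exact (smul_eq_zero.1 two_smul_eq_zero).resolve_left two_ne_zero

theorem linearIndependent_pair_of_isAlt [IsDomain R] [IsTorsionFree R M] (hB : B.IsAlt) {y z : L}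
    (hyz : B y z ≠ 0) : LinearIndependent R ![y, z] := by
  refine LinearIndependent.pair_iff.2 fun s t hst => ⟨?_, ?_⟩
  · simpa [hB z, hyz] using congrArg (B · z) hst
  · simpa [hB y, hyz] using congrArg (B y) hst

theorem isAlt_apply_eq_sum_repr (hB : B.IsAlt) (b : Basis (Fin 3) R L) (u v : L) :
    B u v = (b.repr u 0 * b.repr v 1 - b.repr u 1 * b.repr v 0) • B (b 0) (b 1) +
      (b.repr u 0 * b.repr v 2 - b.repr u 2 * b.repr v 0) • B (b 0) (b 2) +
      (b.repr u 1 * b.repr v 2 - b.repr u 2 * b.repr v 1) • B (b 1) (b 2) := by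
  conv_lhs => rw [← b.sum_repr u, ← b.sum_repr v]
  simp only [Fin.sum_univ_three, map_add, map_smul, LinearMap.add_apply, LinearMap.smul_apply,
    hB (b _), ← hB.neg (b 0) (b 1), ← hB.neg (b 0) (b 2), ← hB.neg (b 1) (b 2)]
  module

theorem eq_zero_of_isAlt_of_basis (hB : B.IsAlt) (b : Basis (Fin 3) R L)
    (h₀₁ : B (b 0) (b 1) = 0) (h₀₂ : B (b 0) (b 2) = 0) (h₁₂ : B (b 1) (b 2) = 0) : B = 0 := by
  ext u v
  simp [isAlt_apply_eq_sum_repr hB b u v, h₀₁, h₀₂, h₁₂]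

end Alternating

section Field

variable {K L : Type*} [Field K] [AddCommGroup L] [Module K L]

section Plane

variable {D : Submodule K L} {x y z : L}

theorem exists_smul_add_smul_eq_of_mem (hD : finrank K D = 2) (hyz : LinearIndependent K ![y, z])
    (hy : y ∈ D) (hz : z ∈ D) {v : L} (hv : v ∈ D) : ∃ p q : K, p • y + q • z = v := by
  have : FiniteDimensional K D := .of_finrank_pos (by simp [hD])
  have span_le : Submodule.span K {y, z} ≤ D := Submodule.span_le.2 (Set.pair_subset hy hz)
  have span_eq : Submodule.span K {y, z} = D :=
    Submodule.eq_of_le_of_finrank_eq span_le <| by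
      rw [← Matrix.range_cons_cons_empty y z ![], finrank_span_eq_card hyz, hD, Fintype.card_fin]
  exact Submodule.mem_span_pair.1 (span_eq ▸ hv)

theorem exists_linearIndependent_pair_of_finrank_eq_two (hD : finrank K D = 2) :
    ∃ y ∈ D, ∃ z ∈ D, LinearIndependent K ![y, z] := by
  have : FiniteDimensional K D := .of_finrank_pos (by simp [hD])
  let c := finBasisOfFinrankEq K D hD
  refine ⟨c 0, (c 0).2, c 1, (c 1).2, ?_⟩
  convert! c.linearIndependent.map' D.subtype D.ker_subtype using 1
  ext i
  fin_cases i <;> rfl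

theorem exists_basis_of_notMem (hL : finrank K L = 3) (hx : x ∉ D) (hy : y ∈ D) (hz : z ∈ D)
    (hyz : LinearIndependent K ![y, z]) :
    ∃ b : Basis (Fin 3) K L, b 0 = x ∧ b 1 = y ∧ b 2 = z := by
  have span_le : Submodule.span K (Set.range ![y, z]) ≤ D := by
    simp [Submodule.span_le, Set.insert_subset_iff, hy, hz]
  have hxyz : LinearIndependent K ![x, y, z] := hyz.finCons fun h => hx (span_le h)
  let b := basisOfLinearIndependentOfCardEqFinrank hxyz (by simp [hL])
  exact ⟨b, by simp [b], by simp [b], by simp [b]⟩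

end Plane

theorem exists_finrank_add_one_eq_of_ne_top [FiniteDimensional K L] {S : Submodule K L}
    (hS : S ≠ ⊤) : ∃ D : Submodule K L, finrank K D + 1 = finrank K L ∧ S ≤ D := by
  obtain ⟨f, hf, hSf⟩ := S.exists_le_ker_of_lt_top hS.lt_top
  exact ⟨LinearMap.ker f, Dual.finrank_ker_add_one_of_ne_zero hf, hSf⟩

theorem exists_apply_eq_self_of_isAlt {B : L →ₗ[K] L →ₗ[K] L} (hB : B.IsAlt) {D : Submodule K L}
    (hD : finrank K D = 2) (hBD : ∀ u ∈ D, ∀ v ∈ D, B u v ∈ D)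
    (hne : ∃ u ∈ D, ∃ v ∈ D, B u v ≠ 0) : ∃ y ∈ D, ∃ z ∈ D, z ≠ 0 ∧ B y z = z := by
  obtain ⟨u, hu, v, hv, huv⟩ := hne
  obtain ⟨p, q, hpq⟩ := exists_smul_add_smul_eq_of_mem hD (linearIndependent_pair_of_isAlt hB huv)
    hu hv (hBD u hu v hv)
  have apply_u : B u (B u v) = q • B u v := by
    conv_lhs => rw [← hpq]
    simp [hB u]
  have apply_v : B v (B u v) = -p • B u v := by
    conv_lhs => rw [← hpq]
    simp [hB v, ← hB.neg u v]
  by_cases hq : q = 0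
  · have hp : p ≠ 0 := by
      rintro rfl
      exact huv (by simp [← hpq, hq])
    exact ⟨-p⁻¹ • v, D.smul_mem _ hv, B u v, hBD u hu v hv, huv, by simp [apply_v, smul_smul, hp]⟩
  · exact ⟨q⁻¹ • u, D.smul_mem _ hu, B u v, hBD u hu v hv, huv, by simp [apply_u, smul_smul, hq]⟩

/-- `(L, bracket, ω)` is an ω-Lie algebra over `K`. Anticommutativity and skew-symmetry are encoded
as alternation, which is the same thing away from characteristic `2`. -/
structure IsOmegaLie (bracket : L →ₗ[K] L →ₗ[K] L) (ω : L →ₗ[K] L →ₗ[K] K) : Prop where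
  isAlt_bracket : bracket.IsAlt
  isAlt_form : ω.IsAlt
  jacobi (a b c : L) :
    bracket (bracket a b) c + bracket (bracket b c) a + bracket (bracket c a) b
      = ω a b • c + ω b c • a + ω c a • b

/-- The basis `x = b 0`, `y = b 1`, `z = b 2` satisfies the defining relations of `L₁`, stated over
an arbitrary field. -/
structure IsL1Basis (bracket : L →ₗ[K] L →ₗ[K] L) (ω : L →ₗ[K] L →ₗ[K] K)
    (b : Basis (Fin 3) K L) : Prop where
  bracket_zero_one : bracket (b 0) (b 1) = b 1
  bracket_zero_two : bracket (b 0) (b 2) = 0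
  bracket_one_two : bracket (b 1) (b 2) = b 2
  form_zero_one : ω (b 0) (b 1) = 1
  form_zero_two : ω (b 0) (b 2) = 0
  form_one_two : ω (b 1) (b 2) = 0

/-- The basis `x = b 0`, `y = b 1`, `z = b 2` satisfies the defining relations of `L₂`, stated over
an arbitrary field. -/
structure IsL2Basis (bracket : L →ₗ[K] L →ₗ[K] L) (ω : L →ₗ[K] L →ₗ[K] K)
    (b : Basis (Fin 3) K L) : Prop where
  bracket_zero_one : bracket (b 0) (b 1) = 0
  bracket_zero_two : bracket (b 0) (b 2) = b 1
  bracket_one_two : bracket (b 1) (b 2) = b 2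
  form_zero_one : ω (b 0) (b 1) = 0
  form_zero_two : ω (b 0) (b 2) = 1
  form_one_two : ω (b 1) (b 2) = 0

namespace IsOmegaLie

variable {bracket : L →ₗ[K] L →ₗ[K] L} {ω : L →ₗ[K] L →ₗ[K] K} {D : Submodule K L} {x y z : L}

theorem form_apply_eq_zero_of_mem (h : IsOmegaLie bracket ω) (hbr : ∀ u v, bracket u v ∈ D)
    (hx : x ∉ D) (hy : y ∈ D) (hz : z ∈ D) : ω y z = 0 := by
  by_contra hne
  have form_smul_eq : ω y z • x = bracket (bracket x y) z + bracket (bracket y z) x +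
      bracket (bracket z x) y - (ω x y • z + ω z x • y) := by
    rw [h.jacobi]
    abel
  refine hx ((D.smul_mem_iff hne).1 (form_smul_eq ▸ D.sub_mem ?_ ?_))
  · exact D.add_mem (D.add_mem (hbr _ _) (hbr _ _)) (hbr _ _)
  · exact D.add_mem (D.smul_mem _ hz) (D.smul_mem _ hy)

theorem form_eq_zero_of_apply_pair_eq_zero (h : IsOmegaLie bracket ω) (hL : finrank K L = 3)
    (hbr : ∀ u v, bracket u v ∈ D) (hx : x ∉ D) (hy : y ∈ D) (hz : z ∈ D)
    (hyz : LinearIndependent K ![y, z]) (hxy : ω x y = 0) (hxz : ω x z = 0) : ω = 0 := by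
  obtain ⟨b, rfl, rfl, rfl⟩ := exists_basis_of_notMem hL hx hy hz hyz
  exact eq_zero_of_isAlt_of_basis h.isAlt_form b hxy hxz (h.form_apply_eq_zero_of_mem hbr hx hy hz)

theorem exists_bracket_ne_zero (h : IsOmegaLie bracket ω) (hL : finrank K L = 3) (hω : ω ≠ 0)
    (hD : finrank K D = 2) (hbr : ∀ u v, bracket u v ∈ D) (hx : x ∉ D) :
    ∃ u ∈ D, ∃ v ∈ D, bracket u v ≠ 0 := by
  by_contra! abelian
  obtain ⟨y, hy, z, hz, hyz⟩ := exists_linearIndependent_pair_of_finrank_eq_two hD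
  have jacobi : -ω x z • y + ω x y • z = 0 := by
    have := h.jacobi x y z
    rw [abelian _ (hbr x y) z hz, abelian y hy z hz, abelian _ (hbr z x) y hy,
      h.form_apply_eq_zero_of_mem hbr hx hy hz, ← h.isAlt_form.neg x z] at this
    simpa [add_comm] using this.symm
  obtain ⟨hxz, hxy⟩ := LinearIndependent.pair_iff.1 hyz _ _ jacobi
  exact hω (h.form_eq_zero_of_apply_pair_eq_zero hL hbr hx hy hz hyz hxy (neg_eq_zero.1 hxz))

theorem exists_bracket_eq_form_smul_add_smul (h : IsOmegaLie bracket ω) (hD : finrank K D = 2)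
    (hbr : ∀ u v, bracket u v ∈ D) (hx : x ∉ D) (hy : y ∈ D) (hz : z ∈ D) (hz0 : z ≠ 0)
    (hyz : bracket y z = z) :
    ∃ s t : K, bracket x y = ω x y • y + s • z ∧ bracket x z = ω x z • y + t • z := by
  have indep : LinearIndependent K ![y, z] :=
    linearIndependent_pair_of_isAlt h.isAlt_bracket (hyz.symm ▸ hz0)
  obtain ⟨a, s, hxy⟩ := exists_smul_add_smul_eq_of_mem hD indep hy hz (hbr x y)
  obtain ⟨c, t, hxz⟩ := exists_smul_add_smul_eq_of_mem hD indep hy hz (hbr x z)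
  have bracket_xy_z : bracket (bracket x y) z = a • z := by
    simp [← hxy, hyz, h.isAlt_bracket z]
  have bracket_yz_x : bracket (bracket y z) x = -(c • y + t • z) := by
    rw [hyz, hxz, h.isAlt_bracket.neg]
  have bracket_zx_y : bracket (bracket z x) y = t • z := by
    simp [← h.isAlt_bracket.neg x z, ← hxz, ← h.isAlt_bracket.neg y z, hyz, h.isAlt_bracket y]
  have jacobi : (ω x z - c) • y + (a - ω x y) • z = 0 := by
    have := h.jacobi x y z
    rw [bracket_xy_z, bracket_yz_x, bracket_zx_y,
      h.form_apply_eq_zero_of_mem hbr hx hy hz, ← h.isAlt_form.neg x z] at this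
    linear_combination (norm := module) this
  obtain ⟨hc, ha⟩ := LinearIndependent.pair_iff.1 indep _ _ jacobi
  rw [← sub_eq_zero.1 ha, sub_eq_zero.1 hc]
  exact ⟨s, t, hxy.symm, hxz.symm⟩

theorem exists_bracket_eq_form_smul (h : IsOmegaLie bracket ω) (hD : finrank K D = 2)
    (hbr : ∀ u v, bracket u v ∈ D) (hx : x ∉ D) (hy : y ∈ D) (hz : z ∈ D) (hz0 : z ≠ 0)
    (hyz : bracket y z = z) :
    ∃ x' ∉ D, ω x' y = ω x y ∧ ω x' z = ω x z ∧
      bracket x' y = ω x y • y ∧ bracket x' z = ω x z • y := by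
  obtain ⟨s, t, hxy, hxz⟩ := h.exists_bracket_eq_form_smul_add_smul hD hbr hx hy hz hz0 hyz
  have hω : ω y z = 0 := h.form_apply_eq_zero_of_mem hbr hx hy hz
  have hv : s • z - t • y ∈ D := D.sub_mem (D.smul_mem s hz) (D.smul_mem t hy)
  refine ⟨x + (s • z - t • y), (D.add_mem_iff_left hv).not.2 hx, ?_, ?_, ?_, ?_⟩
  · simp [← h.isAlt_form.neg y z, h.isAlt_form y, hω]
  · simp [h.isAlt_form z, hω]
  · simp [← h.isAlt_bracket.neg y z, h.isAlt_bracket y, hyz, hxy]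
  · simp [h.isAlt_bracket z, hyz, hxz]

theorem exists_isL1Basis (h : IsOmegaLie bracket ω) (hL : finrank K L = 3) (hω : ω ≠ 0)
    (hD : finrank K D = 2) (hbr : ∀ u v, bracket u v ∈ D) (hx : x ∉ D) (hy : y ∈ D) (hz : z ∈ D)
    (hz0 : z ≠ 0) (hyz : bracket y z = z) (hxz : ω x z = 0) :
    ∃ b : Basis (Fin 3) K L, IsL1Basis bracket ω b := by
  have indep : LinearIndependent K ![y, z] :=
    linearIndependent_pair_of_isAlt h.isAlt_bracket (hyz.symm ▸ hz0)
  have hxy : ω x y ≠ 0 := fun hxy =>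
    hω (h.form_eq_zero_of_apply_pair_eq_zero hL hbr hx hy hz indep hxy hxz)
  obtain ⟨x', hx', form_y, form_z, bracket_y, bracket_z⟩ :=
    h.exists_bracket_eq_form_smul hD hbr hx hy hz hz0 hyz
  obtain ⟨b, hb₀, rfl, rfl⟩ := exists_basis_of_notMem hL
    ((D.smul_mem_iff (inv_ne_zero hxy)).not.2 hx') hy hz indep
  exact ⟨b, by simp [hb₀, bracket_y, smul_smul, hxy], by simp [hb₀, bracket_z, hxz], hyz,
    by simp [hb₀, form_y, hxy], by simp [hb₀, form_z, hxz],
    h.form_apply_eq_zero_of_mem hbr hx hy hz⟩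

theorem exists_isL2Basis (h : IsOmegaLie bracket ω) (hL : finrank K L = 3)
    (hD : finrank K D = 2) (hbr : ∀ u v, bracket u v ∈ D) (hx : x ∉ D) (hy : y ∈ D) (hz : z ∈ D)
    (hz0 : z ≠ 0) (hyz : bracket y z = z) (hxz : ω x z ≠ 0) :
    ∃ b : Basis (Fin 3) K L, IsL2Basis bracket ω b := by
  obtain ⟨y', hy', hyz', hxy'⟩ : ∃ y' ∈ D, bracket y' z = z ∧ ω x y' = 0 :=
    ⟨y - (ω x y / ω x z) • z, D.sub_mem hy (D.smul_mem _ hz),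
      by simp [h.isAlt_bracket z, hyz], by simp [hxz]⟩
  have indep : LinearIndependent K ![y', z] :=
    linearIndependent_pair_of_isAlt h.isAlt_bracket (hyz'.symm ▸ hz0)
  obtain ⟨x', hx', form_y, form_z, bracket_y, bracket_z⟩ :=
    h.exists_bracket_eq_form_smul hD hbr hx hy' hz hz0 hyz'
  obtain ⟨b, hb₀, rfl, rfl⟩ := exists_basis_of_notMem hL
    ((D.smul_mem_iff (inv_ne_zero hxz)).not.2 hx') hy' hz indep
  exact ⟨b, by simp [hb₀, bracket_y, hxy'], by simp [hb₀, bracket_z, smul_smul, hxz], hyz',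
    by simp [hb₀, form_y, hxy'], by simp [hb₀, form_z, hxz],
    h.form_apply_eq_zero_of_mem hbr hx hy' hz⟩

end IsOmegaLie

theorem omega_lie_rank_two_classification_general {bracket : L →ₗ[K] L →ₗ[K] L}
    {ω : L →ₗ[K] L →ₗ[K] K} (h : IsOmegaLie bracket ω) (hL : finrank K L = 3) (hω : ω ≠ 0)
    (hderived : Submodule.span K (Set.range fun p : L × L => bracket p.1 p.2) ≠ ⊤) :
    (∃ b : Basis (Fin 3) K L, IsL1Basis bracket ω b) ∨
      ∃ b : Basis (Fin 3) K L, IsL2Basis bracket ω b := by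
  have : FiniteDimensional K L := .of_finrank_pos (by simp [hL])
  obtain ⟨D, hDL, hle⟩ := exists_finrank_add_one_eq_of_ne_top hderived
  have hD : finrank K D = 2 := by lia
  have hbr (u v : L) : bracket u v ∈ D := hle (Submodule.subset_span ⟨(u, v), rfl⟩)
  obtain ⟨x, -, hx⟩ := SetLike.exists_of_lt (D.lt_top_of_finrank_lt_finrank (by lia))
  obtain ⟨y, hy, z, hz, hz0, hyz⟩ := exists_apply_eq_self_of_isAlt h.isAlt_bracket hD
    (fun u _ v _ => hbr u v) (h.exists_bracket_ne_zero hL hω hD hbr hx)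
  by_cases hxz : ω x z = 0
  · exact .inl (h.exists_isL1Basis hL hω hD hbr hx hy hz hz0 hyz hxz)
  · exact .inr (h.exists_isL2Basis hL hD hbr hx hy hz hz0 hyz hxz)

end Field

section Complex

variable {V : Type*} [AddCommGroup V] [Module ℂ V] {bracket : V →ₗ[ℂ] V →ₗ[ℂ] V}
  {ω : V →ₗ[ℂ] V →ₗ[ℂ] ℂ} {b : Basis (Fin 3) ℂ V}

theorem IsL1Basis.isOmegaLieIsoTo (hb : IsL1Basis bracket ω b) (h : IsOmegaLie bracket ω) :
    IsOmegaLieIsoTo bracket ω brL1 omL1 := by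
  refine ⟨b.equivFun, fun u v => ?_, fun u v => ?_⟩
  · rw [isAlt_apply_eq_sum_repr h.isAlt_bracket b u v, hb.bracket_zero_one, hb.bracket_zero_two,
      hb.bracket_one_two]
    ext i
    fin_cases i <;> simp [brL1]
  · rw [isAlt_apply_eq_sum_repr h.isAlt_form b u v, hb.form_zero_one, hb.form_zero_two,
      hb.form_one_two]
    simp [omL1]

theorem IsL2Basis.isOmegaLieIsoTo (hb : IsL2Basis bracket ω b) (h : IsOmegaLie bracket ω) :
    IsOmegaLieIsoTo bracket ω brL2 omL2 := by
  refine ⟨b.equivFun, fun u v => ?_, fun u v => ?_⟩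
  · rw [isAlt_apply_eq_sum_repr h.isAlt_bracket b u v, hb.bracket_zero_one, hb.bracket_zero_two,
      hb.bracket_one_two]
    ext i
    fin_cases i <;> simp [brL2]
  · rw [isAlt_apply_eq_sum_repr h.isAlt_form b u v, hb.form_zero_one, hb.form_zero_two,
      hb.form_one_two]
    simp [omL2]

end Complex

/-- A 3-dimensional complex ω-Lie algebra with `ω` not identically zero and with
`dim [L,L] = 2` is isomorphic either to `L₁` or to `L₂`. -/
theorem omega_lie_rank_two_classification
    {L : Type*} [AddCommGroup L] [Module ℂ L] [FiniteDimensional ℂ L]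
    (bracket : L →ₗ[ℂ] L →ₗ[ℂ] L) (ω : L →ₗ[ℂ] L →ₗ[ℂ] ℂ)
    (hanti : ∀ a b : L, bracket a b = - bracket b a)
    (hskew : ∀ a b : L, ω a b = - ω b a)
    (hjac : ∀ a b c : L,
      bracket (bracket a b) c + bracket (bracket b c) a + bracket (bracket c a) b
        = ω a b • c + ω b c • a + ω c a • b)
    (hdim : Module.finrank ℂ L = 3)
    (hω : ¬ ∀ a b : L, ω a b = 0)
    (hderived : Module.finrank ℂ
      ↥(Submodule.span ℂ (Set.range fun p : L × L => bracket p.1 p.2)) = 2) :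
    IsOmegaLieIsoTo bracket ω brL1 omL1 ∨ IsOmegaLieIsoTo bracket ω brL2 omL2 := by
  have h : IsOmegaLie bracket ω :=
    ⟨isAlt_of_apply_eq_neg_apply hanti, isAlt_of_apply_eq_neg_apply hskew, hjac⟩
  exact (omega_lie_rank_two_classification_general h hdim (fun h0 => hω (by simp [h0]))
    (Submodule.lt_top_of_finrank_lt_finrank (by lia)).ne).imp
    (fun ⟨_, hb⟩ => hb.isOmegaLieIsoTo h) fun ⟨_, hb⟩ => hb.isOmegaLieIsoTo h
end

section
/- Let L be a 3-dimensional complex ω-Lie algebra with ω not identically zero and with [L,L] = L. Then L is isomorphic to one of: A_α (basis {x,y,z} with [x,y] = x, [x,z] = x+y, [y,z] = z+αx, ω(x,y) = ω(x,z) = 0, ω(y,z) = −1) for some α ∈ ℂ; B (basis {x,y,z} with [x,y] = y, [x,z] = y+z, [y,z] = x, ω(x,y) = ω(x,z) = 0, ω(y,z) = 2); or C_α (basis {x,y,z} with [x,y] = y, [x,z] = αz, [y,z] = x, ω(x,y) = ω(x,z) = 0, ω(y,z) = 1+α) for some nonzero α ∈ ℂ. -/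
/-- The bracket of the ω-Lie algebra `A_α` on `ℂ³`: bilinear extension of
`[x,y] = x`, `[x,z] = x + y`, `[y,z] = z + α x` on the standard basis
`x = e₀, y = e₁, z = e₂`. -/
def brA (α : ℂ) (u v : Fin 3 → ℂ) : Fin 3 → ℂ :=
  ![(u 0 * v 1 - u 1 * v 0) + (u 0 * v 2 - u 2 * v 0) + α * (u 1 * v 2 - u 2 * v 1),
    u 0 * v 2 - u 2 * v 0, u 1 * v 2 - u 2 * v 1]

/-- The form of `A_α`: bilinear extension of `ω(x,y) = ω(x,z) = 0`, `ω(y,z) = -1`. -/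
def omA (u v : Fin 3 → ℂ) : ℂ := -(u 1 * v 2 - u 2 * v 1)

/-- The bracket of the ω-Lie algebra `B` on `ℂ³`: bilinear extension of
`[x,y] = y`, `[x,z] = y + z`, `[y,z] = x`. -/
def brB (u v : Fin 3 → ℂ) : Fin 3 → ℂ :=
  ![u 1 * v 2 - u 2 * v 1, (u 0 * v 1 - u 1 * v 0) + (u 0 * v 2 - u 2 * v 0),
    u 0 * v 2 - u 2 * v 0]

/-- The form of `B`: bilinear extension of `ω(x,y) = ω(x,z) = 0`, `ω(y,z) = 2`. -/
def omB (u v : Fin 3 → ℂ) : ℂ := 2 * (u 1 * v 2 - u 2 * v 1)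

/-- The bracket of the ω-Lie algebra `C_α` on `ℂ³`: bilinear extension of
`[x,y] = y`, `[x,z] = α z`, `[y,z] = x`. -/
def brC (α : ℂ) (u v : Fin 3 → ℂ) : Fin 3 → ℂ :=
  ![u 1 * v 2 - u 2 * v 1, u 0 * v 1 - u 1 * v 0, α * (u 0 * v 2 - u 2 * v 0)]

/-- The form of `C_α`: bilinear extension of `ω(x,y) = ω(x,z) = 0`, `ω(y,z) = 1 + α`. -/
def omC (α : ℂ) (u v : Fin 3 → ℂ) : ℂ := (1 + α) * (u 1 * v 2 - u 2 * v 1)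

/-!
The radical of `ω` is nonzero because the dimension is odd; let `x ≠ 0` lie in it. Since `[L,L] = L`
and `dim L = 3`, the brackets of a basis again form a basis, and `x` is itself a bracket. Either
`x = [u,v]` with `x, u, v` independent, or `x = [x,y]` for some `y`.

In the first case the `ω`-Jacobi identity forces `ad x` to preserve the plane spanned by `u` and
`v`; putting it in Jordan form gives `C_α` (diagonalizable) or `B` (a Jordan block). In the second
case the identity yields `z` with `[x,z] = y` and `[y,z] = r x + s y + z`, where `ω(y,z) = -s`. If
`s ≠ 0` this is `A_α` up to a change of basis; if `s = 0` then `ω = 0`, and `y = [x,z]` takes the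
role of `x` in the first case.
-/

open Module

section LinearAlgebra

section CommRing

variable {R M N : Type*} [CommRing R] [AddCommGroup M] [Module R M] [AddCommGroup N] [Module R N]

theorem isAlt_of_forall_eq_neg [IsAddTorsionFree N] {B : M →ₗ[R] M →ₗ[R] N}
    (hB : ∀ a b, B a b = -B b a) : B.IsAlt :=
  fun a => self_eq_neg.1 (hB a a)

theorem apply_smul_add_smul_add_smul_of_isAlt {B : M →ₗ[R] M →ₗ[R] N} (hB : B.IsAlt) (x y z : M)
    (a b c a' b' c' : R) :
    B (a • x + b • y + c • z) (a' • x + b' • y + c' • z) =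
      (a * b' - b * a') • B x y + (a * c' - c * a') • B x z + (b * c' - c * b') • B y z := by
  simp only [map_add, map_smul, LinearMap.add_apply, LinearMap.smul_apply, hB.self_eq_zero,
    ← hB.neg x y, ← hB.neg x z, ← hB.neg y z]
  module

theorem linearIndependent_of_eq_sum_smul [NoZeroDivisors R] {ι : Type*} [Fintype ι]
    [DecidableEq ι] {v w : ι → M} (hv : LinearIndependent R v) (A : Matrix ι ι R)
    (hA : A.det ≠ 0) (hw : ∀ i, w i = ∑ j, A i j • v j) : LinearIndependent R w := by
  rw [funext hw]
  exact hv.sum_smul_of_nondegenerate (Matrix.nondegenerate_of_det_ne_zero hA)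

theorem eq_zero_of_linearIndependent_three {x y z : M} (h : LinearIndependent R ![x, y, z])
    {a b c : R} (h0 : a • x + b • y + c • z = 0) : a = 0 ∧ b = 0 ∧ c = 0 := by
  have hcoeff := Fintype.linearIndependent_iff.1 h ![a, b, c]
    (by simpa [Fin.sum_univ_three] using h0)
  exact ⟨hcoeff 0, hcoeff 1, hcoeff 2⟩

end CommRing

variable {K V W : Type*} [Field K] [AddCommGroup V] [Module K V] [AddCommGroup W] [Module K W]

theorem exists_eq_smul_add_smul_add_smul (hdim : finrank K V = 3) {x y z : V}
    (h : LinearIndependent K ![x, y, z]) (v : V) : ∃ a b c : K, v = a • x + b • y + c • z := by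
  let e := basisOfLinearIndependentOfCardEqFinrank h (by simp [hdim])
  refine ⟨e.equivFun v 0, e.equivFun v 1, e.equivFun v 2, ?_⟩
  simpa [Fin.sum_univ_three, e] using (e.sum_equivFun v).symm

theorem exists_linearIndependent_three_of_pair (hdim : finrank K V = 3) {x y : V}
    (h : LinearIndependent K ![x, y]) : ∃ z, LinearIndependent K ![x, y, z] := by
  obtain ⟨z, hz⟩ := exists_linearIndependent_snoc_of_lt_finrank h (by simp [hdim])
  have hsnoc : Fin.snoc ![x, y] z = ![x, y, z] := by simp
  exact ⟨z, hsnoc ▸ hz⟩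

theorem exists_linearIndependent_three_of_ne_zero (hdim : finrank K V = 3) {x : V} (hx : x ≠ 0) :
    ∃ y z, LinearIndependent K ![x, y, z] := by
  have hlt : 1 < finrank K V := by simp [hdim]
  obtain ⟨y, hy⟩ := exists_linearIndependent_pair_of_one_lt_finrank hlt hx
  exact ⟨y, exists_linearIndependent_three_of_pair hdim hy⟩

theorem exists_ne_zero_apply_eq_zero_of_isAlt (hdim : finrank K V = 3)
    {ω : V →ₗ[K] V →ₗ[K] K} (hω : ω.IsAlt) : ∃ x ≠ 0, ω x = 0 := by
  have : Nontrivial V := nontrivial_of_finrank_pos (R := K) (M := V) (by simp [hdim])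
  obtain ⟨e, he⟩ := exists_ne (0 : V)
  obtain ⟨f, g, hefg⟩ := exists_linearIndependent_three_of_ne_zero hdim he
  by_cases h0 : ω f g • e + (-ω e g) • f + ω e f • g = 0
  · obtain ⟨-, heg, hef⟩ := eq_zero_of_linearIndependent_three hefg h0
    refine ⟨e, he, LinearMap.ext fun v => ?_⟩
    obtain ⟨a, b, c, rfl⟩ := exists_eq_smul_add_smul_add_smul hdim hefg v
    simp [hω.self_eq_zero, hef, neg_eq_zero.1 heg]
  · refine ⟨_, h0, LinearMap.ext fun v => ?_⟩
    obtain ⟨a, b, c, rfl⟩ := exists_eq_smul_add_smul_add_smul hdim hefg v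
    rw [apply_smul_add_smul_add_smul_of_isAlt hω]
    simp only [smul_eq_mul, LinearMap.zero_apply]
    ring

theorem linearIndependent_apply_of_span_eq_top (hV : finrank K V = 3) (hW : finrank K W = 3)
    {B : V →ₗ[K] V →ₗ[K] W} (hB : B.IsAlt)
    (hspan : Submodule.span K (Set.range fun p : V × V => B p.1 p.2) = ⊤) {x y z : V}
    (h : LinearIndependent K ![x, y, z]) : LinearIndependent K ![B x y, B x z, B y z] := by
  refine linearIndependent_of_top_le_span_of_card_eq_finrank ?_ (by simp [hW])
  rw [← hspan, Submodule.span_le]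
  rintro _ ⟨⟨u, v⟩, rfl⟩
  obtain ⟨a, b, c, rfl⟩ := exists_eq_smul_add_smul_add_smul hV h u
  obtain ⟨a', b', c', rfl⟩ := exists_eq_smul_add_smul_add_smul hV h v
  simp only [apply_smul_add_smul_add_smul_of_isAlt hB]
  refine add_mem (add_mem ?_ ?_) ?_ <;> refine Submodule.smul_mem _ _ (Submodule.subset_span ?_)
  exacts [⟨0, rfl⟩, ⟨1, rfl⟩, ⟨2, rfl⟩]

/-- The condition `[V,V] = V`. -/
def IsPerfect (bracket : V →ₗ[K] V →ₗ[K] V) : Prop :=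
  Submodule.span K (Set.range fun p : V × V => bracket p.1 p.2) = ⊤

variable {bracket : V →ₗ[K] V →ₗ[K] V}

/- Every element of `Λ² V` is decomposable when `dim V = 3`, so `x` is a single bracket `[u,v]`. The
alternatives are whether `x` lies in the plane spanned by `u` and `v`. -/
theorem exists_apply_eq_self_or_exists_apply_eq (hdim : finrank K V = 3) (hB : bracket.IsAlt)
    (hperf : IsPerfect bracket) {x : V} (hx : x ≠ 0) :
    (∃ y, bracket x y = x) ∨ ∃ u v, LinearIndependent K ![x, u, v] ∧ bracket u v = x := by
  obtain ⟨y, z, hxyz⟩ := exists_linearIndependent_three_of_ne_zero hdim hx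
  obtain ⟨a, b, c, habc⟩ := exists_eq_smul_add_smul_add_smul hdim
    (linearIndependent_apply_of_span_eq_top hdim hdim hB hperf hxyz) x
  by_cases hc : c = 0
  · exact .inl ⟨a • y + b • z, by simpa [hc] using habc.symm⟩
  · refine .inr ⟨b • x + c • y, -(a / c) • x + z, ?_, ?_⟩
    · exact linearIndependent_of_eq_sum_smul hxyz !![1, 0, 0; b, c, 0; -(a / c), 0, 1]
        (by simpa [Matrix.det_fin_three] using hc)
        (by simp [Fin.forall_fin_succ, Fin.sum_univ_three])
    · have key := apply_smul_add_smul_add_smul_of_isAlt hB x y z b c 0 (-(a / c)) 0 1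
      have hca : c * (a / c) = a := mul_div_cancel₀ a hc
      simpa [hca, ← habc] using key

theorem exists_triangular_of_preserves_plane [IsAlgClosed K] (hB : bracket.IsAlt) {x u v : V}
    (hxuv : LinearIndependent K ![x, u, v]) (huv : bracket u v = x) {a b c d : K}
    (hu : bracket x u = a • u + b • v) (hv : bracket x v = c • u + d • v) :
    ∃ y z, LinearIndependent K ![x, y, z] ∧ bracket y z = x ∧
      ∃ l n m : K, bracket x y = l • y ∧ bracket x z = n • y + m • z := by
  obtain ⟨l, hl⟩ := Module.End.exists_eigenvalue (Matrix.toLin' !![a, c; b, d])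
  obtain ⟨w, hw⟩ := hl.exists_hasEigenvector
  have hw0 : a * w 0 + c * w 1 = l * w 0 := by
    simpa [Matrix.vecHead, Matrix.vecTail] using congrFun hw.apply_eq_smul 0
  have hw1 : b * w 0 + d * w 1 = l * w 1 := by
    simpa [Matrix.vecHead, Matrix.vecTail] using congrFun hw.apply_eq_smul 1
  obtain ⟨s, t, hst⟩ : ∃ s t, w 0 * t - w 1 * s = 1 := by
    by_cases h0 : w 0 = 0
    · have h1 : w 1 ≠ 0 := fun h1 => hw.2 (by ext i; fin_cases i <;> assumption)
      exact ⟨-(w 1)⁻¹, 0, by simp [h1]⟩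
    · exact ⟨0, (w 0)⁻¹, by simp [h0]⟩
  refine ⟨w 0 • u + w 1 • v, s • u + t • v, ?_, ?_, l,
    (s * a + t * c) * t - (s * b + t * d) * s,
    w 0 * (s * b + t * d) - w 1 * (s * a + t * c), ?_, ?_⟩
  · exact linearIndependent_of_eq_sum_smul hxuv !![1, 0, 0; 0, w 0, w 1; 0, s, t]
      (by simp [Matrix.det_fin_three, hst])
      (by simp [Fin.forall_fin_succ, Fin.sum_univ_three])
  · have key := apply_smul_add_smul_add_smul_of_isAlt hB x u v 0 (w 0) (w 1) 0 s t
    simpa [huv, hst] using key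
  · simp only [map_add, map_smul, hu, hv]
    linear_combination (norm := module) hw0 • u + hw1 • v
  · simp only [map_add, map_smul, hu, hv]
    linear_combination (norm := module)
      (-(s * a + t * c) * hst) • u - ((s * b + t * d) * hst) • v

end LinearAlgebra

section OmegaLie

/-- The `ω`-Lie algebra axioms. The bracket and the form are required to be alternating, which is
the meaning of anticommutativity that is also correct in characteristic two. -/
structure IsOmegaLie_s6 {R L : Type*} [CommRing R] [AddCommGroup L] [Module R L]
    (bracket : L →ₗ[R] L →ₗ[R] L) (ω : L →ₗ[R] L →ₗ[R] R) : Prop where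
  bracket_isAlt : bracket.IsAlt
  form_isAlt : ω.IsAlt
  jacobi : ∀ a b c, bracket (bracket a b) c + bracket (bracket b c) a + bracket (bracket c a) b
    = ω a b • c + ω b c • a + ω c a • b

/-- Multiplication tables with respect to a distinguished triple: `x, y, z` are independent, `x`
lies in the radical of `ω`, and `[x,y] = p`, `[x,z] = q`, `[y,z] = r`, `ω(y,z) = c`. -/
structure HasTable {R L : Type*} [CommRing R] [AddCommGroup L] [Module R L]
    (bracket : L →ₗ[R] L →ₗ[R] L) (ω : L →ₗ[R] L →ₗ[R] R) (x y z p q r : L) (c : R) : Prop where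
  linearIndependent : LinearIndependent R ![x, y, z]
  form_left : ω x = 0
  bracket_left_mid : bracket x y = p
  bracket_left_right : bracket x z = q
  bracket_mid_right : bracket y z = r
  form_mid_right : ω y z = c

section CommRing

variable {R L : Type*} [CommRing R] [AddCommGroup L] [Module R L]

/-- The algebra is `A_α` in a suitable basis. -/
def HasTypeA (bracket : L →ₗ[R] L →ₗ[R] L) (ω : L →ₗ[R] L →ₗ[R] R) (α : R) : Prop :=
  ∃ x y z, HasTable bracket ω x y z x (x + y) (z + α • x) (-1)

/-- The algebra is `B` in a suitable basis. -/
def HasTypeB (bracket : L →ₗ[R] L →ₗ[R] L) (ω : L →ₗ[R] L →ₗ[R] R) : Prop :=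
  ∃ x y z, HasTable bracket ω x y z y (y + z) x 2

/-- The algebra is `C_α` in a suitable basis. -/
def HasTypeC (bracket : L →ₗ[R] L →ₗ[R] L) (ω : L →ₗ[R] L →ₗ[R] R) (α : R) : Prop :=
  ∃ x y z, HasTable bracket ω x y z y (α • z) x (1 + α)

theorem IsOmegaLie_s6.leibniz_of_form_left_eq_zero {bracket : L →ₗ[R] L →ₗ[R] L}
    {ω : L →ₗ[R] L →ₗ[R] R} (h : IsOmegaLie_s6 bracket ω) {x : L} (hx : ω x = 0) (y z : L) :
    bracket (bracket x y) z + bracket y (bracket x z) - bracket x (bracket y z) = ω y z • x := by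
  have hB := h.bracket_isAlt
  have hzx : ω z x = 0 := by rw [← h.form_isAlt.neg x z, hx]; simp
  have hjac := h.jacobi x y z
  rw [hzx, hx, ← hB.neg x z, map_neg, LinearMap.neg_apply, hB.neg (bracket x z) y,
    ← hB.neg x (bracket y z)] at hjac
  simpa [sub_eq_add_neg, add_right_comm] using hjac

end CommRing

variable {K L : Type*} [Field K] [AddCommGroup L] [Module K L]
  {bracket : L →ₗ[K] L →ₗ[K] L} {ω : L →ₗ[K] L →ₗ[K] K}

namespace IsOmegaLie_s6

theorem hasTable (h : IsOmegaLie_s6 bracket ω) {x y z p q r : L} {c : K}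
    (hxyz : LinearIndependent K ![x, y, z]) (hx : ω x = 0) (hp : bracket x y = p)
    (hq : bracket x z = q) (hr : bracket y z = r)
    (hc : bracket p z + bracket y q - bracket x r = c • x) : HasTable bracket ω x y z p q r c := by
  refine ⟨hxyz, hx, hp, hq, hr, smul_left_injective K (hxyz.ne_zero 0) ?_⟩
  have hleibniz := h.leibniz_of_form_left_eq_zero hx y z
  rw [hp, hq, hr, hc] at hleibniz
  exact hleibniz.symm

theorem exists_bracket_eq_smul_add_smul (h : IsOmegaLie_s6 bracket ω) (hdim : finrank K L = 3)
    (hperf : IsPerfect bracket) {x u v : L} (hx : ω x = 0)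
    (hxuv : LinearIndependent K ![x, u, v]) (huv : bracket u v = x) :
    ∃ a b c d : K, bracket x u = a • u + b • v ∧ bracket x v = c • u + d • v := by
  have hB := h.bracket_isAlt
  obtain ⟨p₀, p₁, p₂, hp⟩ := exists_eq_smul_add_smul_add_smul hdim hxuv (bracket x u)
  obtain ⟨q₀, q₁, q₂, hq⟩ := exists_eq_smul_add_smul_add_smul hdim hxuv (bracket x v)
  have hrel : (-q₀) • bracket x u + p₀ • bracket x v + (p₁ + q₂ - ω u v) • bracket u v = 0 := by
    have hleibniz := h.leibniz_of_form_left_eq_zero hx u v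
    have hpv : bracket (bracket x u) v = p₀ • bracket x v + p₁ • bracket u v := by
      rw [hp]; simp [hB.self_eq_zero]
    have huq : bracket u (bracket x v) = (-q₀) • bracket x u + q₂ • bracket u v := by
      rw [hq]; simp [hB.self_eq_zero, ← hB.neg x u]
    rw [hpv, huq, huv, hB.self_eq_zero] at hleibniz
    rw [huv]
    linear_combination (norm := module) hleibniz
  obtain ⟨hq₀, hp₀, -⟩ := eq_zero_of_linearIndependent_three
    (linearIndependent_apply_of_span_eq_top hdim hdim hB hperf hxuv) hrel
  exact ⟨p₁, p₂, q₁, q₂, by simpa [hp₀] using hp, by simpa [neg_eq_zero.1 hq₀] using hq⟩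

theorem exists_normalized_triangular [IsAlgClosed K] (h : IsOmegaLie_s6 bracket ω)
    (hdim : finrank K L = 3) (hperf : IsPerfect bracket) {x u v : L} (hx : ω x = 0)
    (hxuv : LinearIndependent K ![x, u, v]) (huv : bracket u v = x) :
    ∃ x' y z, ∃ n m : K, LinearIndependent K ![x', y, z] ∧ ω x' = 0 ∧ m ≠ 0 ∧
      bracket x' y = y ∧ bracket x' z = n • y + m • z ∧ bracket y z = x' := by
  obtain ⟨a, b, c, d, hu, hv⟩ := h.exists_bracket_eq_smul_add_smul hdim hperf hx hxuv huv
  obtain ⟨y, z, hxyz, hyz, l, n, m, hxy, hxz⟩ :=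
    exists_triangular_of_preserves_plane h.bracket_isAlt hxuv huv hu hv
  have hbr := linearIndependent_apply_of_span_eq_top hdim hdim h.bracket_isAlt hperf hxyz
  have hl : l ≠ 0 := by
    rintro rfl
    exact hbr.ne_zero 0 (by simpa using hxy)
  have hm : m ≠ 0 := by
    rintro rfl
    exact hl (eq_zero_of_linearIndependent_three hbr (a := -n) (b := l) (c := 0)
      (by rw [hxy, hxz]; module)).2.1
  refine ⟨l⁻¹ • x, y, l⁻¹ • z, n / l ^ 2, m / l, ?_, by simp [hx], div_ne_zero hm hl, ?_, ?_, ?_⟩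
  · exact linearIndependent_of_eq_sum_smul hxyz !![l⁻¹, 0, 0; 0, 1, 0; 0, 0, l⁻¹]
      (by simp [Matrix.det_fin_three, hl]) (by simp [Fin.forall_fin_succ, Fin.sum_univ_three])
  · simp [hxy, hl]
  · simp only [map_smul, LinearMap.smul_apply, hxz]
    match_scalars <;> field_simp
  · simp [hyz]

theorem hasTypeC_of_diagonal (h : IsOmegaLie_s6 bracket ω) {x y z : L} {m : K}
    (hxyz : LinearIndependent K ![x, y, z]) (hx : ω x = 0) (hxy : bracket x y = y)
    (hxz : bracket x z = m • z) (hyz : bracket y z = x) : HasTypeC bracket ω m :=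
  ⟨x, y, z, h.hasTable hxyz hx hxy hxz hyz (by
    simp only [map_smul, hyz, h.bracket_isAlt.self_eq_zero]; module)⟩

theorem hasTypeB_or_hasTypeC_of_triangular [IsAlgClosed K] (h : IsOmegaLie_s6 bracket ω)
    {x y z : L} {n m : K} (hxyz : LinearIndependent K ![x, y, z]) (hx : ω x = 0) (hm : m ≠ 0)
    (hxy : bracket x y = y) (hxz : bracket x z = n • y + m • z) (hyz : bracket y z = x) :
    HasTypeB bracket ω ∨ ∃ α ≠ 0, HasTypeC bracket ω α := by
  have hB := h.bracket_isAlt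
  by_cases hm1 : m = 1
  · subst hm1
    by_cases hn : n = 0
    · exact .inr ⟨1, hm, h.hasTypeC_of_diagonal hxyz hx hxy (by simpa [hn] using hxz) hyz⟩
    obtain ⟨r, rfl⟩ := IsAlgClosed.exists_eq_mul_self n
    have hr : r ≠ 0 := left_ne_zero_of_mul hn
    refine .inl ⟨x, r • y, r⁻¹ • z, h.hasTable ?_ hx ?_ ?_ ?_ ?_⟩
    · exact linearIndependent_of_eq_sum_smul hxyz !![1, 0, 0; 0, r, 0; 0, 0, r⁻¹]
        (by simp [Matrix.det_fin_three, hr]) (by simp [Fin.forall_fin_succ, Fin.sum_univ_three])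
    · simp [hxy]
    · simp [hxz, smul_smul, hr]
    · simp [hyz, smul_smul, hr]
    · simp only [map_add, map_smul, LinearMap.smul_apply, hyz, hB.self_eq_zero]
      match_scalars
      field_simp
      norm_num
  · have hm1' : m - 1 ≠ 0 := sub_ne_zero.2 hm1
    refine .inr ⟨m, hm, h.hasTypeC_of_diagonal (x := x) (y := y) (z := z + (n / (m - 1)) • y)
      ?_ hx hxy ?_ ?_⟩
    · exact linearIndependent_of_eq_sum_smul hxyz !![1, 0, 0; 0, 1, 0; 0, n / (m - 1), 1]
        (by simp [Matrix.det_fin_three])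
        (by simp [Fin.forall_fin_succ, Fin.sum_univ_three, add_comm])
    · simp only [map_add, map_smul, hxy, hxz]
      match_scalars <;> field_simp
      ring
    · simp [hyz, hB.self_eq_zero]

theorem hasTypeB_or_hasTypeC_of_bracket_eq [IsAlgClosed K] (h : IsOmegaLie_s6 bracket ω)
    (hdim : finrank K L = 3) (hperf : IsPerfect bracket) {x u v : L} (hx : ω x = 0)
    (hxuv : LinearIndependent K ![x, u, v]) (huv : bracket u v = x) :
    HasTypeB bracket ω ∨ ∃ α ≠ 0, HasTypeC bracket ω α := by
  obtain ⟨x', y, z, n, m, hxyz, hx', hm, hxy, hxz, hyz⟩ :=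
    h.exists_normalized_triangular hdim hperf hx hxuv huv
  exact h.hasTypeB_or_hasTypeC_of_triangular hxyz hx' hm hxy hxz hyz

theorem exists_table_of_bracket_eq_self (h : IsOmegaLie_s6 bracket ω) (hdim : finrank K L = 3)
    (hperf : IsPerfect bracket) {x y : L}
    (hx0 : x ≠ 0) (hx : ω x = 0) (hxy : bracket x y = x) :
    ∃ z, ∃ r s : K, LinearIndependent K ![x, y, z] ∧ bracket x z = y ∧
      bracket y z = r • x + s • y + z := by
  have hB := h.bracket_isAlt
  obtain ⟨z, hxyz⟩ : ∃ z, LinearIndependent K ![x, y, z] := by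
    refine exists_linearIndependent_three_of_pair hdim ((LinearIndependent.pair_iff' hx0).2 ?_)
    rintro a rfl
    exact hx0 (by simpa [hB.self_eq_zero] using hxy.symm)
  have hbr := linearIndependent_apply_of_span_eq_top hdim hdim hB hperf hxyz
  obtain ⟨q₀, q₁, q₂, hq⟩ := exists_eq_smul_add_smul_add_smul hdim hxyz (bracket x z)
  obtain ⟨r₀, r₁, r₂, hr⟩ := exists_eq_smul_add_smul_add_smul hdim hxyz (bracket y z)
  have hrel : (-(q₀ + r₁ + ω y z)) • bracket x y + (1 - r₂) • bracket x z + q₂ • bracket y z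
      = 0 := by
    have hleibniz := h.leibniz_of_form_left_eq_zero hx y z
    have hyq : bracket y (bracket x z) = (-q₀) • bracket x y + q₂ • bracket y z := by
      rw [hq]; simp [hB.self_eq_zero, ← hB.neg x y]
    have hxr : bracket x (bracket y z) = r₁ • bracket x y + r₂ • bracket x z := by
      rw [hr]; simp [hB.self_eq_zero]
    rw [hyq, hxr, hxy] at hleibniz
    rw [hxy]
    linear_combination (norm := module) hleibniz
  obtain ⟨-, hr₂, rfl⟩ := eq_zero_of_linearIndependent_three hbr hrel
  obtain rfl : 1 = r₂ := sub_eq_zero.1 hr₂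
  have hq₁ : q₁ ≠ 0 := by
    rintro rfl
    exact one_ne_zero (eq_zero_of_linearIndependent_three hbr (a := -q₀) (b := 1) (c := 0)
      (by rw [hq, hxy]; module)).2.1
  refine ⟨-(q₁⁻¹ * q₀) • y + q₁⁻¹ • z, q₁⁻¹ * r₀, q₁⁻¹ * (r₁ + q₀), ?_, ?_, ?_⟩
  · exact linearIndependent_of_eq_sum_smul hxyz !![1, 0, 0; 0, 1, 0; 0, -(q₁⁻¹ * q₀), q₁⁻¹]
      (by simpa [Matrix.det_fin_three] using hq₁)
      (by simp [Fin.forall_fin_succ, Fin.sum_univ_three])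
  · simp only [map_add, map_smul, hq, hxy]
    match_scalars <;> field_simp <;> ring
  · simp only [map_add, map_smul, hr, hB.self_eq_zero]
    module

theorem hasTypeA_or_hasTypeB_or_hasTypeC_of_bracket_eq_self [IsAlgClosed K]
    (h : IsOmegaLie_s6 bracket ω) (hdim : finrank K L = 3) (hperf : IsPerfect bracket) {x y : L}
    (hx0 : x ≠ 0) (hx : ω x = 0) (hxy : bracket x y = x) :
    (∃ α, HasTypeA bracket ω α) ∨ HasTypeB bracket ω ∨ ∃ α ≠ 0, HasTypeC bracket ω α := by
  have hB := h.bracket_isAlt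
  obtain ⟨z, r, s, hxyz, hxz, hyz⟩ :=
    h.exists_table_of_bracket_eq_self hdim hperf hx0 hx hxy
  by_cases hs : s = 0
  · have hωyz : ω y z = 0 :=
      (h.hasTable hxyz hx hxy hxz hyz (c := 0) (by
        simp only [map_add, map_smul, hxy, hxz, hB.self_eq_zero, hs]; module)).form_mid_right
    have hy : ω y = 0 := by
      ext v
      obtain ⟨a, b, c, rfl⟩ := exists_eq_smul_add_smul_add_smul hdim hxyz v
      simp [← h.form_isAlt.neg x y, hx, h.form_isAlt.self_eq_zero, hωyz]
    have hyxz : LinearIndependent K ![y, x, z] :=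
      linearIndependent_of_eq_sum_smul hxyz !![0, 1, 0; 1, 0, 0; 0, 0, 1]
        (by simp [Matrix.det_fin_three]) (by simp [Fin.forall_fin_succ, Fin.sum_univ_three])
    exact .inr (h.hasTypeB_or_hasTypeC_of_bracket_eq hdim hperf hy hyxz hxz)
  · refine .inl ⟨r / s ^ 2, s • x, y, s⁻¹ • z + y, h.hasTable ?_ (by simp [hx]) ?_ ?_ ?_ ?_⟩
    · exact linearIndependent_of_eq_sum_smul hxyz !![s, 0, 0; 0, 1, 0; 0, 1, s⁻¹]
        (by simp [Matrix.det_fin_three, hs])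
        (by simp [Fin.forall_fin_succ, Fin.sum_univ_three, add_comm])
    · simp [hxy]
    · simp [hxy, hxz, hs, add_comm]
    · simp only [map_add, map_smul, hyz, hB.self_eq_zero]
      match_scalars <;> field_simp
    · simp only [map_add, map_smul, LinearMap.smul_apply, hxy, hxz, hB.self_eq_zero,
        ← hB.neg x y]
      match_scalars <;> field_simp <;> ring

end IsOmegaLie_s6

theorem omega_lie_rank_three_classification_general [IsAlgClosed K] (h : IsOmegaLie_s6 bracket ω)
    (hdim : finrank K L = 3) (hperf : IsPerfect bracket) :
    (∃ α, HasTypeA bracket ω α) ∨ HasTypeB bracket ω ∨ ∃ α ≠ 0, HasTypeC bracket ω α := by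
  obtain ⟨x, hx0, hx⟩ := exists_ne_zero_apply_eq_zero_of_isAlt hdim h.form_isAlt
  obtain ⟨y, hxy⟩ | ⟨u, v, hxuv, huv⟩ :=
    exists_apply_eq_self_or_exists_apply_eq hdim h.bracket_isAlt hperf hx0
  · exact h.hasTypeA_or_hasTypeB_or_hasTypeC_of_bracket_eq_self hdim hperf hx0 hx hxy
  · exact .inr (h.hasTypeB_or_hasTypeC_of_bracket_eq hdim hperf hx hxuv huv)

end OmegaLie

section Complex

variable {L : Type*} [AddCommGroup L] [Module ℂ L]
  {bracket : L →ₗ[ℂ] L →ₗ[ℂ] L} {ω : L →ₗ[ℂ] L →ₗ[ℂ] ℂ}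

theorem HasTable.isOmegaLieIsoTo (h : IsOmegaLie_s6 bracket ω) (hdim : finrank ℂ L = 3)
    {x y z p q r : L} {c : ℂ} (ht : HasTable bracket ω x y z p q r c)
    {br' : (Fin 3 → ℂ) → (Fin 3 → ℂ) → Fin 3 → ℂ} {ω' : (Fin 3 → ℂ) → (Fin 3 → ℂ) → ℂ}
    (hbr' : ∀ u v, br' u v 0 • x + br' u v 1 • y + br' u v 2 • z =
      (u 0 * v 1 - u 1 * v 0) • p + (u 0 * v 2 - u 2 * v 0) • q + (u 1 * v 2 - u 2 * v 1) • r)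
    (hω' : ∀ u v, ω' u v = (u 1 * v 2 - u 2 * v 1) * c) :
    IsOmegaLieIsoTo bracket ω br' ω' := by
  let e := basisOfLinearIndependentOfCardEqFinrank ht.linearIndependent (by simp [hdim])
  have he (w : Fin 3 → ℂ) : e.equivFun.symm w = w 0 • x + w 1 • y + w 2 • z := by
    simp [e, Basis.equivFun_symm_apply, Fin.sum_univ_three]
  have hcoord (a : L) : a = e.equivFun a 0 • x + e.equivFun a 1 • y + e.equivFun a 2 • z := by
    rw [← he, LinearEquiv.symm_apply_apply]
  refine ⟨e.equivFun, fun a b => ?_, fun a b => ?_⟩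
  · rw [← LinearEquiv.eq_symm_apply, he, hbr']
    conv_lhs =>
      rw [hcoord a, hcoord b, apply_smul_add_smul_add_smul_of_isAlt h.bracket_isAlt,
        ht.bracket_left_mid, ht.bracket_left_right, ht.bracket_mid_right]
  · rw [hω']
    conv_rhs =>
      rw [hcoord a, hcoord b, apply_smul_add_smul_add_smul_of_isAlt h.form_isAlt, ht.form_left,
        ht.form_mid_right]
    simp

theorem HasTypeA.isOmegaLieIsoTo (h : IsOmegaLie_s6 bracket ω) (hdim : finrank ℂ L = 3) {α : ℂ} :
    HasTypeA bracket ω α → IsOmegaLieIsoTo bracket ω (brA α) omA := by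
  rintro ⟨x, y, z, ht⟩
  exact ht.isOmegaLieIsoTo h hdim (fun u v => by simp only [brA, Matrix.cons_val]; module)
    (fun u v => by simp [omA])

theorem HasTypeB.isOmegaLieIsoTo (h : IsOmegaLie_s6 bracket ω) (hdim : finrank ℂ L = 3) :
    HasTypeB bracket ω → IsOmegaLieIsoTo bracket ω brB omB := by
  rintro ⟨x, y, z, ht⟩
  exact ht.isOmegaLieIsoTo h hdim (fun u v => by simp only [brB, Matrix.cons_val]; module)
    (fun u v => by rw [omB, mul_comm])

theorem HasTypeC.isOmegaLieIsoTo (h : IsOmegaLie_s6 bracket ω) (hdim : finrank ℂ L = 3) {α : ℂ} :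
    HasTypeC bracket ω α → IsOmegaLieIsoTo bracket ω (brC α) (omC α) := by
  rintro ⟨x, y, z, ht⟩
  exact ht.isOmegaLieIsoTo h hdim (fun u v => by simp only [brC, Matrix.cons_val]; module)
    (fun u v => by rw [omC, mul_comm])

end Complex

/-- A 3-dimensional complex ω-Lie algebra with `ω` not identically zero and with
`[L,L] = L` is isomorphic to some `A_α` (`α ∈ ℂ`), to `B`, or to some `C_α`
(`0 ≠ α ∈ ℂ`). -/
theorem omega_lie_rank_three_classification
    {L : Type*} [AddCommGroup L] [Module ℂ L] [FiniteDimensional ℂ L]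
    (bracket : L →ₗ[ℂ] L →ₗ[ℂ] L) (ω : L →ₗ[ℂ] L →ₗ[ℂ] ℂ)
    (hanti : ∀ a b : L, bracket a b = - bracket b a)
    (hskew : ∀ a b : L, ω a b = - ω b a)
    (hjac : ∀ a b c : L,
      bracket (bracket a b) c + bracket (bracket b c) a + bracket (bracket c a) b
        = ω a b • c + ω b c • a + ω c a • b)
    (hdim : Module.finrank ℂ L = 3)
    (hω : ¬ ∀ a b : L, ω a b = 0)
    (hderived : Submodule.span ℂ (Set.range fun p : L × L => bracket p.1 p.2) = ⊤) :
    (∃ α : ℂ, IsOmegaLieIsoTo bracket ω (brA α) omA) ∨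
      IsOmegaLieIsoTo bracket ω brB omB ∨
      (∃ α : ℂ, α ≠ 0 ∧ IsOmegaLieIsoTo bracket ω (brC α) (omC α)) := by
  have : IsAddTorsionFree L := .of_isTorsionFree ℂ L
  have h : IsOmegaLie_s6 bracket ω :=
    ⟨isAlt_of_forall_eq_neg hanti, isAlt_of_forall_eq_neg hskew, hjac⟩
  exact (omega_lie_rank_three_classification_general h hdim hderived).imp
    (fun ⟨α, hA⟩ => ⟨α, hA.isOmegaLieIsoTo h hdim⟩)
    (.imp (·.isOmegaLieIsoTo h hdim) fun ⟨α, hα, hC⟩ => ⟨α, hα, hC.isOmegaLieIsoTo h hdim⟩)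
end

section
/- Let L be a 3-dimensional complex ω-Lie algebra with ω not identically zero (a nontrivial, i.e. non-Lie, ω-Lie algebra). Then L is isomorphic to one of the following ω-Lie algebras, each given on a basis {x,y,z} with all unlisted values of ω on basis pairs equal to 0: L₁ ([x,y] = y, [x,z] = 0, [y,z] = z, ω(x,y) = 1); L₂ ([x,y] = 0, [x,z] = y, [y,z] = z, ω(x,z) = 1); A_α ([x,y] = x, [x,z] = x+y, [y,z] = z+αx, ω(y,z) = −1) for some α ∈ ℂ; B ([x,y] = y, [x,z] = y+z, [y,z] = x, ω(y,z) = 2); or C_α ([x,y] = y, [x,z] = αz, [y,z] = x, ω(y,z) = 1+α) for some nonzero α ∈ ℂ. -/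
/-!
Write `τ a = tr [a, ·]`. Taking the trace of the ω-Jacobi identity in its last argument gives
`τ [a, b] = (dim L - 2) ω(a, b)`, so `ω = τ ∘ [·, ·]` in dimension three. Moreover, in dimension
three the Jacobiator of *any* alternating bracket is `τ x [y, z] + τ y [z, x] + τ z [x, y]`.

Let `x ≠ 0` span the radical of `ω`. If `τ x ≠ 0`, then `[x, ·]` has a nonzero eigenvalue, it
preserves `ker τ`, and the two identities give `[y, z] ∈ ℂ x` for `y, z ∈ ker τ`; the Jordan form of
`[x, ·]` on `ker τ` decides between `L₂`, `B` and `C_α`. If `τ x = 0`, then `[x, y] ∈ ℂ x` for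
`y ∈ ker τ`, and whether `[x, ·]` has rank one or two decides between `L₁` and `A_α`.
-/

open Module

section LinearAlgebra

variable {ι R K M N V : Type*} [CommRing R] [Field K]
  [AddCommGroup M] [Module R M] [AddCommGroup N] [Module R N] [AddCommGroup V] [Module K V]

theorem trace_eq_sum_repr [Fintype ι] (b : Basis ι R M) (f : M →ₗ[R] M) :
    LinearMap.trace R M f = ∑ i, b.repr (f (b i)) i := by
  classical
  simp [LinearMap.trace_eq_matrix_trace R b, Matrix.trace, LinearMap.toMatrix_apply]

theorem eq_sum_repr_fin_three (b : Basis (Fin 3) R M) (v : M) :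
    v = b.repr v 0 • b 0 + b.repr v 1 • b 1 + b.repr v 2 • b 2 := by
  rw [← Fin.sum_univ_three (fun i ↦ b.repr v i • b i), b.sum_repr]

theorem apply_eq_sum_minors_of_isAlt {B : M →ₗ[R] M →ₗ[R] N} (hB : B.IsAlt)
    (b : Basis (Fin 3) R M) (u v : M) :
    B u v = (b.repr u 0 * b.repr v 1 - b.repr u 1 * b.repr v 0) • B (b 0) (b 1) +
      (b.repr u 0 * b.repr v 2 - b.repr u 2 * b.repr v 0) • B (b 0) (b 2) +
      (b.repr u 1 * b.repr v 2 - b.repr u 2 * b.repr v 1) • B (b 1) (b 2) := by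
  conv_lhs => rw [← b.sum_repr u, ← b.sum_repr v]
  simp only [Fin.sum_univ_three, map_add, map_smul, LinearMap.add_apply, LinearMap.smul_apply,
    hB.self_eq_zero, ← hB.neg (b 0) (b 1), ← hB.neg (b 0) (b 2), ← hB.neg (b 1) (b 2)]
  module

theorem exists_hasEigenvalue_ne_zero_of_trace_ne_zero [IsAlgClosed K] [FiniteDimensional K V]
    {f : End K V} (hf : LinearMap.trace K V f ≠ 0) : ∃ μ ≠ 0, f.HasEigenvalue μ := by
  contrapose! hf
  rw [End.trace_eq_sum_roots_charpoly_of_splits (IsAlgClosed.splits _)]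
  refine Multiset.sum_eq_zero fun μ hμ ↦ by_contra fun hμ0 ↦ hf μ hμ0 ?_
  exact (End.hasEigenvalue_iff_isRoot_charpoly f μ).2 (Polynomial.isRoot_of_mem_roots hμ)

theorem exists_ne_zero_apply_eq_zero_of_isAlt_of_odd_finrank [NeZero (2 : K)]
    {B : V →ₗ[K] V →ₗ[K] K} (hB : B.IsAlt) (hodd : Odd (finrank K V)) :
    ∃ x ≠ 0, B x = 0 := by
  have : FiniteDimensional K V := .of_finrank_pos hodd.pos
  let b := finBasis K V
  have htranspose : (LinearMap.toMatrix₂ b b B).transpose = -LinearMap.toMatrix₂ b b B := by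
    ext i j
    simp [LinearMap.toMatrix₂_apply, hB.neg]
  have hdet : (LinearMap.toMatrix₂ b b B).det = 0 := by
    have hneg := congrArg Matrix.det htranspose
    rw [Matrix.det_transpose, Matrix.det_neg, Fintype.card_fin, hodd.neg_one_pow, neg_one_mul]
      at hneg
    have h2 : (2 : K) * (LinearMap.toMatrix₂ b b B).det = 0 := by linear_combination hneg
    exact (mul_eq_zero.1 h2).resolve_left two_ne_zero
  obtain ⟨c, hc0, hc⟩ := Matrix.exists_vecMul_eq_zero_iff.2 hdet
  refine ⟨∑ i, c i • b i, fun h ↦ hc0 (funext ?_), b.ext fun j ↦ ?_⟩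
  · exact Fintype.linearIndependent_iff.1 b.linearIndependent c h
  · simpa [Matrix.vecMul, dotProduct, LinearMap.toMatrix₂_apply] using congrFun hc j

theorem linearIndependent_of_det_ne_zero_of_eq_sum [Fintype ι] [DecidableEq ι] {u v : ι → V}
    (hu : LinearIndependent K u) {A : Matrix ι ι K} (hA : A.det ≠ 0)
    (hv : ∀ i, v i = ∑ j, A i j • u j) : LinearIndependent K v := by
  rw [Fintype.linearIndependent_iff] at hu ⊢
  intro c hc
  have hcA : ∑ j, (Matrix.vecMul c A) j • u j = 0 := by
    rw [← hc]
    simp only [hv, Matrix.vecMul, dotProduct, Finset.smul_sum, Finset.sum_smul, mul_smul]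
    exact Finset.sum_comm
  exact congrFun (Matrix.eq_zero_of_vecMul_eq_zero hA (funext (hu _ hcA)))

theorem exists_basis_of_linearIndependent_three {x y z : V} (hdim : finrank K V = 3)
    (hli : LinearIndependent K ![x, y, z]) :
    ∃ b : Basis (Fin 3) K V, b 0 = x ∧ b 1 = y ∧ b 2 = z :=
  ⟨basisOfLinearIndependentOfCardEqFinrank hli (by simp [hdim]), by simp, by simp, by simp⟩

theorem exists_mem_ker_linearIndependent_three {f : V →ₗ[K] K} {x y : V} (hdim : finrank K V = 3)
    (hx : f x ≠ 0) (hy : f y = 0) (hy0 : y ≠ 0) :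
    ∃ z, f z = 0 ∧ LinearIndependent K ![x, y, z] := by
  have : FiniteDimensional K V := .of_finrank_eq_succ hdim
  have hf : f ≠ 0 := fun h ↦ hx (by simp [h])
  have hker : 1 < finrank K f.ker := by
    have := Dual.finrank_ker_add_one_of_ne_zero hf
    lia
  obtain ⟨z, hz⟩ := exists_linearIndependent_pair_of_one_lt_finrank hker
    (x := ⟨y, hy⟩) (by simpa [Subtype.ext_iff] using hy0)
  have hyz : ![y, (z : V)] = f.ker.subtype ∘ ![⟨y, hy⟩, z] := by
    ext i
    fin_cases i <;> rfl
  have hspan : Submodule.span K (Set.range ![y, (z : V)]) ≤ f.ker := by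
    rw [Submodule.span_le, hyz]
    rintro _ ⟨i, rfl⟩
    exact Subtype.coe_prop _
  exact ⟨z, z.2, linearIndependent_finCons.2
    ⟨hyz ▸ hz.map' f.ker.subtype f.ker.ker_subtype, fun hmem ↦ hx (hspan hmem)⟩⟩

end LinearAlgebra

section TraceAd

variable {R L : Type*} [CommRing R] [AddCommGroup L] [Module R L]

/-- The linear form `a ↦ tr [a, ·]` attached to a bilinear bracket. -/
noncomputable def traceAd (br : L →ₗ[R] L →ₗ[R] L) : L →ₗ[R] R :=
  LinearMap.trace R L ∘ₗ br

variable {br : L →ₗ[R] L →ₗ[R] L}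

theorem traceAd_apply_basis_of_isAlt (hbr : br.IsAlt) (b : Basis (Fin 3) R L) {p q r : Fin 3 → R}
    (hp : br (b 0) (b 1) = p 0 • b 0 + p 1 • b 1 + p 2 • b 2)
    (hq : br (b 0) (b 2) = q 0 • b 0 + q 1 • b 1 + q 2 • b 2)
    (hr : br (b 1) (b 2) = r 0 • b 0 + r 1 • b 1 + r 2 • b 2) :
    traceAd br (b 0) = p 1 + q 2 ∧ traceAd br (b 1) = r 2 - p 0 ∧
      traceAd br (b 2) = -(q 0 + r 1) := by
  simp only [traceAd, LinearMap.comp_apply, trace_eq_sum_repr b, Fin.sum_univ_three,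
    hbr.self_eq_zero, ← hbr.neg (b 0) (b 1), ← hbr.neg (b 0) (b 2), ← hbr.neg (b 1) (b 2),
    hp, hq, hr]
  refine ⟨?_, ?_, ?_⟩ <;> simp [sub_eq_add_neg, add_comm]

theorem jacobiator_eq_traceAd_smul_of_isAlt (hbr : br.IsAlt) (b : Basis (Fin 3) R L) :
    br (br (b 0) (b 1)) (b 2) + br (br (b 1) (b 2)) (b 0) + br (br (b 2) (b 0)) (b 1) =
      traceAd br (b 0) • br (b 1) (b 2) + traceAd br (b 1) • br (b 2) (b 0) +
        traceAd br (b 2) • br (b 0) (b 1) := by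
  have hp := eq_sum_repr_fin_three b (br (b 0) (b 1))
  have hq := eq_sum_repr_fin_three b (br (b 0) (b 2))
  have hr := eq_sum_repr_fin_three b (br (b 1) (b 2))
  obtain ⟨h0, h1, h2⟩ := traceAd_apply_basis_of_isAlt hbr b hp hq hr
  rw [h0, h1, h2, ← hbr.neg (b 0) (b 2)]
  generalize b.repr (br (b 0) (b 1)) = p, b.repr (br (b 0) (b 2)) = q,
    b.repr (br (b 1) (b 2)) = r at *
  have hinner : br (br (b 0) (b 1)) (b 2) + br (br (b 1) (b 2)) (b 0) -
      br (br (b 0) (b 2)) (b 1) = (p 1 + q 2) • br (b 1) (b 2) -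
        (r 2 - p 0) • br (b 0) (b 2) - (q 0 + r 1) • br (b 0) (b 1) := by
    conv_lhs => rw [hp, hq, hr]
    simp only [map_add, map_smul, LinearMap.add_apply, LinearMap.smul_apply, hbr.self_eq_zero,
      ← hbr.neg (b 0) (b 1), ← hbr.neg (b 0) (b 2), ← hbr.neg (b 1) (b 2)]
    module
  rw [map_neg, LinearMap.neg_apply, ← sub_eq_add_neg, hinner]
  module

theorem exists_bracket_smul_eq_self_of_traceAd_ne_zero {K V : Type*} [Field K] [IsAlgClosed K]
    [AddCommGroup V] [Module K V] [FiniteDimensional K V] {br : V →ₗ[K] V →ₗ[K] V} {x : V}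
    (hx : traceAd br x ≠ 0) : ∃ c ≠ (0 : K), ∃ y ≠ 0, br (c • x) y = y := by
  obtain ⟨μ, hμ, hμev⟩ := exists_hasEigenvalue_ne_zero_of_trace_ne_zero (f := br x) hx
  obtain ⟨y, hy⟩ := hμev.exists_hasEigenvector
  refine ⟨μ⁻¹, inv_ne_zero hμ, y, hy.2, ?_⟩
  rw [map_smul, LinearMap.smul_apply, hy.apply_eq_smul, inv_smul_smul₀ hμ]

end TraceAd

/-- The axioms of an ω-Lie algebra, with both anticommutativity conditions stated as
`LinearMap.IsAlt`, so that they keep their meaning in characteristic two. -/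
structure IsOmegaLie_s7 {R L : Type*} [CommRing R] [AddCommGroup L] [Module R L]
    (br : L →ₗ[R] L →ₗ[R] L) (ω : L →ₗ[R] L →ₗ[R] R) : Prop where
  isAlt_bracket : br.IsAlt
  isAlt_form : ω.IsAlt
  jacobi (a b c : L) : br (br a b) c + br (br b c) a + br (br c a) b =
    ω a b • c + ω b c • a + ω c a • b

namespace IsOmegaLie_s7

section CommRing

variable {R L : Type*} [CommRing R] [AddCommGroup L] [Module R L]
  {br : L →ₗ[R] L →ₗ[R] L} {ω : L →ₗ[R] L →ₗ[R] R}

theorem ad_bracket (h : IsOmegaLie_s7 br ω) (a b : L) :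
    br (br a b) = br a * br b - br b * br a + ω a b • LinearMap.id +
      (ω b).smulRight a - (ω a).smulRight b := by
  ext c
  have hjac := h.jacobi a b c
  rw [← h.isAlt_bracket.neg a (br b c), ← h.isAlt_bracket.neg a c, map_neg, LinearMap.neg_apply,
    h.isAlt_bracket.neg (br a c) b, ← h.isAlt_form.neg a c] at hjac
  simp only [LinearMap.add_apply, LinearMap.sub_apply, LinearMap.smul_apply, Module.End.mul_apply,
    LinearMap.id_apply, LinearMap.smulRight_apply]
  linear_combination (norm := module) hjac

theorem traceAd_bracket [StrongRankCondition R] [Module.Free R L] [Module.Finite R L]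
    (h : IsOmegaLie_s7 br ω) (a b : L) :
    traceAd br (br a b) = (finrank R L - 2) * ω a b := by
  simp only [traceAd, LinearMap.comp_apply, h.ad_bracket, map_add, map_sub, map_smul,
    LinearMap.trace_mul_comm R (br b) (br a), LinearMap.trace_id, LinearMap.trace_smulRight,
    ← h.isAlt_form.neg a b, smul_eq_mul]
  ring

theorem traceAd_smul_bracket (h : IsOmegaLie_s7 br ω) (b : Basis (Fin 3) R L) :
    traceAd br (b 0) • br (b 1) (b 2) + traceAd br (b 1) • br (b 2) (b 0) +
        traceAd br (b 2) • br (b 0) (b 1) =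
      ω (b 0) (b 1) • b 2 + ω (b 1) (b 2) • b 0 + ω (b 2) (b 0) • b 1 := by
  rw [← jacobiator_eq_traceAd_smul_of_isAlt h.isAlt_bracket, h.jacobi]

end CommRing

section Field

variable {K L : Type*} [Field K] [AddCommGroup L] [Module K L]
  {br : L →ₗ[K] L →ₗ[K] L} {ω : L →ₗ[K] L →ₗ[K] K} {x y z : L}

theorem form_eq_traceAd_bracket (h : IsOmegaLie_s7 br ω) (hdim : finrank K L = 3) (a b : L) :
    ω a b = traceAd br (br a b) := by
  have : FiniteDimensional K L := .of_finrank_eq_succ hdim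
  rw [h.traceAd_bracket, hdim]
  norm_num

theorem form_ne_zero_of_linearIndependent (h : IsOmegaLie_s7 br ω) (hdim : finrank K L = 3)
    (hω : ω ≠ 0) (hx : ω x = 0) (hli : LinearIndependent K ![x, y, z]) : ω y z ≠ 0 := by
  obtain ⟨b, rfl, rfl, rfl⟩ := exists_basis_of_linearIndependent_three hdim hli
  contrapose! hω
  ext u v
  simp [apply_eq_sum_minors_of_isAlt h.isAlt_form b u v, hx, hω]

theorem exists_normalForm_of_traceAd_ne_zero [IsAlgClosed K] (h : IsOmegaLie_s7 br ω)
    (hdim : finrank K L = 3) (hω : ω ≠ 0) (hx : ω x = 0) (hτx : traceAd br x ≠ 0) :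
    ∃ (x y z : L) (α ε : K), LinearIndependent K ![x, y, z] ∧
      br x y = y ∧ br x z = ε • y + α • z ∧ br y z = x := by
  have : FiniteDimensional K L := .of_finrank_eq_succ hdim
  obtain ⟨x, hx, hτx, y, hy0, hxy⟩ :
      ∃ x, ω x = 0 ∧ traceAd br x ≠ 0 ∧ ∃ y ≠ 0, br x y = y := by
    obtain ⟨c, hc, y, hy⟩ := exists_bracket_smul_eq_self_of_traceAd_ne_zero hτx
    exact ⟨c • x, by simp [hx], by simp [hc, hτx], y, hy⟩
  have hτy : traceAd br y = 0 := by
    rw [← hxy, ← h.form_eq_traceAd_bracket hdim, hx, LinearMap.zero_apply]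
  obtain ⟨z, hτz, hli, hyz⟩ : ∃ z, traceAd br z = 0 ∧ LinearIndependent K ![x, y, z] ∧
      ω y z = traceAd br x := by
    obtain ⟨w, hτw, hli⟩ := exists_mem_ker_linearIndependent_three hdim hτx hτy hy0
    have hyw := h.form_ne_zero_of_linearIndependent hdim hω hx hli
    refine ⟨(traceAd br x / ω y w) • w, by simp [hτw], ?_, by simp [hyw]⟩
    exact linearIndependent_of_det_ne_zero_of_eq_sum hli
      (A := !![1, 0, 0; 0, 1, 0; 0, 0, traceAd br x / ω y w])
      (by simp [Matrix.det_fin_three, hτx, hyw]) (by simp [Fin.forall_fin_succ, Fin.sum_univ_three])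
  obtain ⟨b, rfl, rfl, rfl⟩ := exists_basis_of_linearIndependent_three hdim hli
  have hzx : ω (b 2) (b 0) = 0 := by simp [← h.isAlt_form.neg (b 0) (b 2), hx]
  have hbr_yz : br (b 1) (b 2) = b 0 := by
    have hjac := h.traceAd_smul_bracket b
    rw [hτy, hτz, hx, hyz, hzx] at hjac
    exact smul_right_injective L hτx (by simpa using hjac)
  have hbr_xz := eq_sum_repr_fin_three b (br (b 0) (b 2))
  have hcoeff : b.repr (br (b 0) (b 2)) 0 = 0 := by
    have hτ := congrArg (traceAd br) hbr_xz
    rw [← h.form_eq_traceAd_bracket hdim, hx] at hτ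
    simpa [hτy, hτz, hτx] using hτ
  rw [hcoeff, zero_smul, zero_add] at hbr_xz
  exact ⟨b 0, b 1, b 2, _, _, hli, hxy, hbr_xz, hbr_yz⟩

theorem exists_basis_of_traceAd_eq_zero (h : IsOmegaLie_s7 br ω) (hdim : finrank K L = 3)
    (hω : ω ≠ 0) (hx : ω x = 0) (hx0 : x ≠ 0) (hτx : traceAd br x = 0) :
    ∃ b : Basis (Fin 3) K L, b 0 = x ∧ traceAd br (b 1) = 0 ∧ traceAd br (b 2) = -1 ∧
      ω (b 1) (b 2) = -1 := by
  obtain ⟨w, hτw⟩ : ∃ w, traceAd br w ≠ 0 := by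
    contrapose! hω
    ext a b
    simp [h.form_eq_traceAd_bracket hdim, hω]
  obtain ⟨v, hτv, hli⟩ := exists_mem_ker_linearIndependent_three hdim hτw hτx hx0
  have hli' : LinearIndependent K ![x, v, w] :=
    linearIndependent_of_det_ne_zero_of_eq_sum hli (A := !![0, 1, 0; 0, 0, 1; 1, 0, 0])
      (by simp [Matrix.det_fin_three]) (by simp [Fin.forall_fin_succ, Fin.sum_univ_three])
  have hvw := h.form_ne_zero_of_linearIndependent hdim hω hx hli'
  obtain ⟨b, rfl, hb1, hb2⟩ := exists_basis_of_linearIndependent_three hdim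
    (linearIndependent_of_det_ne_zero_of_eq_sum hli'
      (v := ![x, (traceAd br w / ω v w) • v, -(traceAd br w)⁻¹ • w])
      (A := !![1, 0, 0; 0, traceAd br w / ω v w, 0; 0, 0, -(traceAd br w)⁻¹])
      (by simp [Matrix.det_fin_three, hτw, hvw])
      (by simp [Fin.forall_fin_succ, Fin.sum_univ_three]))
  refine ⟨b, rfl, by simp [hb1, hτv], by simp [hb2, hτw], ?_⟩
  simp only [hb1, hb2, map_smul, LinearMap.smul_apply, smul_eq_mul]
  field_simp

theorem exists_normalForm_of_traceAd_eq_zero (h : IsOmegaLie_s7 br ω) (hdim : finrank K L = 3)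
    (hω : ω ≠ 0) (hx : ω x = 0) (hx0 : x ≠ 0) (hτx : traceAd br x = 0) :
    ∃ (x y z : L) (c r : K), LinearIndependent K ![x, y, z] ∧
      br x y = x ∧ br x z = x + c • y ∧ br y z = r • x + z := by
  obtain ⟨b, rfl, hτy, hτz, hyz⟩ := h.exists_basis_of_traceAd_eq_zero hdim hω hx hx0 hτx
  have hzx : ω (b 2) (b 0) = 0 := by simp [← h.isAlt_form.neg (b 0) (b 2), hx]
  have hbr_xy : br (b 0) (b 1) = b 0 := by
    have hjac := h.traceAd_smul_bracket b
    rw [hτx, hτy, hτz, hx, hyz, hzx] at hjac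
    simpa using hjac
  have hbr_xz := eq_sum_repr_fin_three b (br (b 0) (b 2))
  have hbr_yz := eq_sum_repr_fin_three b (br (b 1) (b 2))
  generalize b.repr (br (b 0) (b 2)) = q, b.repr (br (b 1) (b 2)) = r at hbr_xz hbr_yz
  have hq2 : q 2 = 0 := by
    have hτ := h.form_eq_traceAd_bracket hdim (b 0) (b 2)
    simpa [hx, hbr_xz, hτx, hτy, hτz] using hτ
  have hr2 : r 2 = 1 := by
    have hτ := h.form_eq_traceAd_bracket hdim (b 1) (b 2)
    simpa [hyz, hbr_yz, hτx, hτy, hτz] using hτ.symm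
  have hqr : q 0 + r 1 = 1 := by
    have hτ := (traceAd_apply_basis_of_isAlt h.isAlt_bracket b (p := ![1, 0, 0])
      (by simpa using hbr_xy) hbr_xz hbr_yz).2.2
    linear_combination hτ - hτz
  refine ⟨b 0, b 1, b 2 + r 1 • b 1, q 1, r 0, ?_, hbr_xy, ?_, ?_⟩
  · exact linearIndependent_of_det_ne_zero_of_eq_sum b.linearIndependent
      (A := !![1, 0, 0; 0, 1, 0; 0, r 1, 1]) (by simp [Matrix.det_fin_three])
      (by simp [Fin.forall_fin_succ, Fin.sum_univ_three, add_comm])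
  · rw [map_add, map_smul, hbr_xy, hbr_xz, hq2]
    linear_combination (norm := module) hqr • b 0
  · rw [map_add, map_smul, h.isAlt_bracket.self_eq_zero, hbr_yz, hr2]
    module

end Field

section Complex

variable {L : Type*} [AddCommGroup L] [Module ℂ L]
  {br : L →ₗ[ℂ] L →ₗ[ℂ] L} {ω : L →ₗ[ℂ] L →ₗ[ℂ] ℂ} {x y z : L}

/- Since `ω = τ ∘ [·, ·]`, matching the brackets of basis vectors is enough; the right-hand side of
`hω'` is `τ ∘ [·, ·]` computed in the model from the structure constants `p, q, r`. -/
theorem isOmegaLieIsoTo_of_bracket_eq (h : IsOmegaLie_s7 br ω) (hdim : finrank ℂ L = 3)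
    (hli : LinearIndependent ℂ ![x, y, z]) {p q r : Fin 3 → ℂ}
    (hp : br x y = p 0 • x + p 1 • y + p 2 • z) (hq : br x z = q 0 • x + q 1 • y + q 2 • z)
    (hr : br y z = r 0 • x + r 1 • y + r 2 • z)
    {br' : (Fin 3 → ℂ) → (Fin 3 → ℂ) → (Fin 3 → ℂ)} {ω' : (Fin 3 → ℂ) → (Fin 3 → ℂ) → ℂ}
    (hbr' : ∀ u v, br' u v = (u 0 * v 1 - u 1 * v 0) • p + (u 0 * v 2 - u 2 * v 0) • q +
      (u 1 * v 2 - u 2 * v 1) • r)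
    (hω' : ∀ u v, ω' u v = (p 1 + q 2) * br' u v 0 + (r 2 - p 0) * br' u v 1 -
      (q 0 + r 1) * br' u v 2) :
    IsOmegaLieIsoTo br ω br' ω' := by
  obtain ⟨b, rfl, rfl, rfl⟩ := exists_basis_of_linearIndependent_three hdim hli
  have hbr (u v : L) : b.equivFun (br u v) = br' (b.equivFun u) (b.equivFun v) := by
    rw [apply_eq_sum_minors_of_isAlt h.isAlt_bracket b u v, hbr', hp, hq, hr]
    ext i
    fin_cases i <;> simp
  refine ⟨b.equivFun, hbr, fun u v ↦ ?_⟩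
  obtain ⟨h0, h1, h2⟩ := traceAd_apply_basis_of_isAlt h.isAlt_bracket b hp hq hr
  have hτ := congrArg (traceAd br) (eq_sum_repr_fin_three b (br u v))
  simp only [map_add, map_smul, smul_eq_mul, h0, h1, h2] at hτ
  rw [hω', ← hbr, h.form_eq_traceAd_bracket hdim, hτ]
  simp only [Basis.equivFun_apply]
  ring

theorem isOmegaLieIsoTo_L1 (h : IsOmegaLie_s7 br ω) (hdim : finrank ℂ L = 3)
    (hli : LinearIndependent ℂ ![x, y, z]) (hxy : br x y = y) (hxz : br x z = 0)
    (hyz : br y z = z) : IsOmegaLieIsoTo br ω brL1 omL1 := by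
  refine h.isOmegaLieIsoTo_of_bracket_eq hdim hli (p := ![0, 1, 0]) (q := ![0, 0, 0])
    (r := ![0, 0, 1]) (by simpa) (by simpa) (by simpa) (fun u v ↦ ?_) fun u v ↦ ?_
  · ext i; fin_cases i <;> simp [brL1]
  · simp [omL1, brL1]

theorem isOmegaLieIsoTo_L2 (h : IsOmegaLie_s7 br ω) (hdim : finrank ℂ L = 3)
    (hli : LinearIndependent ℂ ![x, y, z]) (hxy : br x y = 0) (hxz : br x z = y)
    (hyz : br y z = z) : IsOmegaLieIsoTo br ω brL2 omL2 := by
  refine h.isOmegaLieIsoTo_of_bracket_eq hdim hli (p := ![0, 0, 0]) (q := ![0, 1, 0])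
    (r := ![0, 0, 1]) (by simpa) (by simpa) (by simpa) (fun u v ↦ ?_) fun u v ↦ ?_
  · ext i; fin_cases i <;> simp [brL2]
  · simp [omL2, brL2]

theorem isOmegaLieIsoTo_A (h : IsOmegaLie_s7 br ω) (hdim : finrank ℂ L = 3)
    (hli : LinearIndependent ℂ ![x, y, z]) {α : ℂ} (hxy : br x y = x) (hxz : br x z = x + y)
    (hyz : br y z = z + α • x) : IsOmegaLieIsoTo br ω (brA α) omA := by
  refine h.isOmegaLieIsoTo_of_bracket_eq hdim hli (p := ![1, 0, 0]) (q := ![1, 1, 0])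
    (r := ![α, 0, 1]) (by simpa) (by simpa) (by simpa [add_comm] using hyz)
    (fun u v ↦ ?_) fun u v ↦ ?_
  · ext i; fin_cases i <;> simp [brA, mul_comm]
  · simp [omA, brA]

theorem isOmegaLieIsoTo_B (h : IsOmegaLie_s7 br ω) (hdim : finrank ℂ L = 3)
    (hli : LinearIndependent ℂ ![x, y, z]) (hxy : br x y = y) (hxz : br x z = y + z)
    (hyz : br y z = x) : IsOmegaLieIsoTo br ω brB omB := by
  refine h.isOmegaLieIsoTo_of_bracket_eq hdim hli (p := ![0, 1, 0]) (q := ![0, 1, 1])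
    (r := ![1, 0, 0]) (by simpa) (by simpa) (by simpa) (fun u v ↦ ?_) fun u v ↦ ?_
  · ext i; fin_cases i <;> simp [brB]
  · simp [omB, brB, one_add_one_eq_two]

theorem isOmegaLieIsoTo_C (h : IsOmegaLie_s7 br ω) (hdim : finrank ℂ L = 3)
    (hli : LinearIndependent ℂ ![x, y, z]) {α : ℂ} (hxy : br x y = y) (hxz : br x z = α • z)
    (hyz : br y z = x) : IsOmegaLieIsoTo br ω (brC α) (omC α) := by
  refine h.isOmegaLieIsoTo_of_bracket_eq hdim hli (p := ![0, 1, 0]) (q := ![0, 0, α])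
    (r := ![1, 0, 0]) (by simpa) (by simpa) (by simpa) (fun u v ↦ ?_) fun u v ↦ ?_
  · ext i; fin_cases i <;> simp [brC, mul_comm]
  · simp [omC, brC]

theorem isOmegaLieIsoTo_L2_or_C_of_diagonal (h : IsOmegaLie_s7 br ω) (hdim : finrank ℂ L = 3)
    (hli : LinearIndependent ℂ ![x, y, z]) {α : ℂ} (hxy : br x y = y) (hxz : br x z = α • z)
    (hyz : br y z = x) :
    IsOmegaLieIsoTo br ω brL2 omL2 ∨ ∃ α : ℂ, α ≠ 0 ∧ IsOmegaLieIsoTo br ω (brC α) (omC α) := by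
  rcases eq_or_ne α 0 with rfl | hα
  · have hli' : LinearIndependent ℂ ![-z, x, y] :=
      linearIndependent_of_det_ne_zero_of_eq_sum hli (A := !![0, 0, -1; 1, 0, 0; 0, 1, 0])
        (by simp [Matrix.det_fin_three]) (by simp [Fin.forall_fin_succ, Fin.sum_univ_three])
    refine .inl (h.isOmegaLieIsoTo_L2 hdim hli' ?_ ?_ hxy)
    · rw [map_neg, LinearMap.neg_apply, h.isAlt_bracket.neg, hxz, zero_smul]
    · rw [map_neg, LinearMap.neg_apply, h.isAlt_bracket.neg, hyz]
  · exact .inr ⟨α, hα, h.isOmegaLieIsoTo_C hdim hli hxy hxz hyz⟩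

theorem isOmegaLieIsoTo_B_of_jordan (h : IsOmegaLie_s7 br ω) (hdim : finrank ℂ L = 3)
    (hli : LinearIndependent ℂ ![x, y, z]) {ε : ℂ} (hε : ε ≠ 0) (hxy : br x y = y)
    (hxz : br x z = ε • y + z) (hyz : br y z = x) : IsOmegaLieIsoTo br ω brB omB := by
  obtain ⟨c, hc⟩ := IsAlgClosed.exists_pow_nat_eq ε⁻¹ two_pos
  have hcε : c * (c * ε) = 1 := by rw [← mul_assoc, ← sq, hc, inv_mul_cancel₀ hε]
  have hli' : LinearIndependent ℂ ![x, (c * ε) • y, c • z] :=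
    linearIndependent_of_det_ne_zero_of_eq_sum hli (A := !![1, 0, 0; 0, c * ε, 0; 0, 0, c])
      (by simp [Matrix.det_fin_three, hε, left_ne_zero_of_mul_eq_one hcε])
      (by simp [Fin.forall_fin_succ, Fin.sum_univ_three])
  refine h.isOmegaLieIsoTo_B hdim hli' ?_ ?_ ?_
  · rw [map_smul, hxy]
  · rw [map_smul, hxz, smul_add, mul_smul]
  · rw [map_smul, map_smul, LinearMap.smul_apply, hyz, smul_smul, hcε, one_smul]

theorem isOmegaLieIsoTo_L2_or_B_or_C (h : IsOmegaLie_s7 br ω) (hdim : finrank ℂ L = 3)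
    (hω : ω ≠ 0) (hx : ω x = 0) (hτx : traceAd br x ≠ 0) :
    IsOmegaLieIsoTo br ω brL2 omL2 ∨ IsOmegaLieIsoTo br ω brB omB ∨
      ∃ α : ℂ, α ≠ 0 ∧ IsOmegaLieIsoTo br ω (brC α) (omC α) := by
  obtain ⟨x, y, z, α, ε, hli, hxy, hxz, hyz⟩ :=
    h.exists_normalForm_of_traceAd_ne_zero hdim hω hx hτx
  by_cases hjordan : α = 1 ∧ ε ≠ 0
  · obtain ⟨rfl, hε⟩ := hjordan
    exact .inr (.inl (h.isOmegaLieIsoTo_B_of_jordan hdim hli hε hxy (by simpa using hxz) hyz))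
  obtain ⟨s, hs⟩ : ∃ s : ℂ, s + ε = α * s := by
    rcases eq_or_ne α 1 with rfl | hα
    · exact ⟨0, by simpa using hjordan⟩
    · have := sub_ne_zero.2 hα
      exact ⟨ε / (α - 1), by field_simp; ring⟩
  have hli' : LinearIndependent ℂ ![x, y, s • y + z] :=
    linearIndependent_of_det_ne_zero_of_eq_sum hli (A := !![1, 0, 0; 0, 1, 0; 0, s, 1])
      (by simp [Matrix.det_fin_three]) (by simp [Fin.forall_fin_succ, Fin.sum_univ_three])
  have hxz' : br x (s • y + z) = α • (s • y + z) := by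
    rw [map_add, map_smul, hxy, hxz]
    linear_combination (norm := module) hs • y
  have hyz' : br y (s • y + z) = x := by
    rw [map_add, map_smul, h.isAlt_bracket.self_eq_zero, hyz, smul_zero, zero_add]
  exact (h.isOmegaLieIsoTo_L2_or_C_of_diagonal hdim hli' hxy hxz' hyz').imp_right .inr

theorem isOmegaLieIsoTo_L1_or_A (h : IsOmegaLie_s7 br ω) (hdim : finrank ℂ L = 3)
    (hω : ω ≠ 0) (hx : ω x = 0) (hx0 : x ≠ 0) (hτx : traceAd br x = 0) :
    IsOmegaLieIsoTo br ω brL1 omL1 ∨ ∃ α : ℂ, IsOmegaLieIsoTo br ω (brA α) omA := by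
  obtain ⟨x, y, z, c, r, hli, hxy, hxz, hyz⟩ :=
    h.exists_normalForm_of_traceAd_eq_zero hdim hω hx hx0 hτx
  have hyx : br y x = -x := by rw [← h.isAlt_bracket.neg, hxy]
  have hzx : br z x = -(x + c • y) := by rw [← h.isAlt_bracket.neg, hxz]
  rcases eq_or_ne c 0 with rfl | hc
  · have hli' : LinearIndependent ℂ ![y - z, -(r • x + z), x] :=
      linearIndependent_of_det_ne_zero_of_eq_sum hli (A := !![0, 1, -1; -r, 0, -1; 1, 0, 0])
        (by simp [Matrix.det_fin_three])
        (by simp [Fin.forall_fin_succ, Fin.sum_univ_three, sub_eq_add_neg, add_comm])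
    refine .inl (h.isOmegaLieIsoTo_L1 hdim hli' ?_ ?_ ?_)
    · simp only [map_sub, map_add, map_neg, map_smul, LinearMap.sub_apply, hyx, hzx, hyz,
        h.isAlt_bracket.self_eq_zero]
      module
    · rw [map_sub, LinearMap.sub_apply, hyx, hzx]
      module
    · simp only [map_add, map_neg, map_smul, LinearMap.neg_apply, LinearMap.add_apply,
        LinearMap.smul_apply, hzx, h.isAlt_bracket.self_eq_zero]
      module
  · have hli' : LinearIndependent ℂ ![c⁻¹ • x, y, z] :=
      linearIndependent_of_det_ne_zero_of_eq_sum hli (A := !![c⁻¹, 0, 0; 0, 1, 0; 0, 0, 1])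
        (by simp [Matrix.det_fin_three, hc]) (by simp [Fin.forall_fin_succ, Fin.sum_univ_three])
    refine .inr ⟨r * c, h.isOmegaLieIsoTo_A hdim hli' ?_ ?_ ?_⟩
    · rw [map_smul, LinearMap.smul_apply, hxy]
    · rw [map_smul, LinearMap.smul_apply, hxz, smul_add, inv_smul_smul₀ hc]
    · rw [hyz, smul_smul, mul_inv_cancel_right₀ hc, add_comm]

end Complex

end IsOmegaLie_s7

/-- Main theorem.
Every 3-dimensional complex ω-Lie algebra with `ω` not identically zero is isomorphic
to one of `L₁`, `L₂`, `A_α` (`α ∈ ℂ`), `B`, or `C_α` (`0 ≠ α ∈ ℂ`). -/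
theorem omega_lie_complex_classification
    {L : Type*} [AddCommGroup L] [Module ℂ L] [FiniteDimensional ℂ L]
    (bracket : L →ₗ[ℂ] L →ₗ[ℂ] L) (ω : L →ₗ[ℂ] L →ₗ[ℂ] ℂ)
    (hanti : ∀ a b : L, bracket a b = - bracket b a)
    (hskew : ∀ a b : L, ω a b = - ω b a)
    (hjac : ∀ a b c : L,
      bracket (bracket a b) c + bracket (bracket b c) a + bracket (bracket c a) b
        = ω a b • c + ω b c • a + ω c a • b)
    (hdim : Module.finrank ℂ L = 3)
    (hω : ¬ ∀ a b : L, ω a b = 0) :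
    IsOmegaLieIsoTo bracket ω brL1 omL1 ∨
      IsOmegaLieIsoTo bracket ω brL2 omL2 ∨
      (∃ α : ℂ, IsOmegaLieIsoTo bracket ω (brA α) omA) ∨
      IsOmegaLieIsoTo bracket ω brB omB ∨
      (∃ α : ℂ, α ≠ 0 ∧ IsOmegaLieIsoTo bracket ω (brC α) (omC α)) := by
  have : IsAddTorsionFree L := .of_isTorsionFree ℂ L
  have h : IsOmegaLie_s7 bracket ω :=
    ⟨fun a ↦ self_eq_neg.1 (hanti a a), fun a ↦ self_eq_neg.1 (hskew a a), hjac⟩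
  have hω0 : ω ≠ 0 := fun h0 ↦ hω fun a b ↦ by rw [h0]; rfl
  obtain ⟨x, hx0, hx⟩ := exists_ne_zero_apply_eq_zero_of_isAlt_of_odd_finrank h.isAlt_form
    (by rw [hdim]; decide)
  by_cases hτx : traceAd bracket x = 0
  · have := h.isOmegaLieIsoTo_L1_or_A hdim hω0 hx hx0 hτx
    tauto
  · have := h.isOmegaLieIsoTo_L2_or_B_or_C hdim hω0 hx hτx
    tauto
end
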